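/- arXiv:0810.0966 — 2 statements merged into one kernel-verified Lean document; each statement's English description precedes it below -/
import Mathlib

section
/- Let T be a tree with minimal algebraic connectivity among all trees with a given degree sequence, and let f be a Fiedler vector of T. If P is the path induced by all non-pendant vertices of T with non-negative f-value, then the vertex degrees along P are monotone, attaining their minimum at the end of P nearest the characteristic vertex or characteristic edge of f; the same holds for the path of non-pendant vertices with non-positive f-value. -/
/-!
The proof rests on an exchange argument. Let `g` be an eigenvector for `α(T)`, and let `v`, `w` be
vertices with `deg w < deg v` and `g v < g w`. Suppose that `deg v - deg w` branches at `v`, none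
containing `w`, carry only nonnegative values of `g`. Reattach them to `w`, and add `g w - g v` to
`g` on them. The result is a tree with the same degree sequence, on which the modified vector has
the same energy as `g` on `T` but a larger variance, so by Courant-Fischer
(`algConn_le_of_sum_zero`) the algebraic connectivity is smaller: `exchange`, `exchange_sides`.
This contradicts the minimality of `T`.

To apply it to consecutive vertices `v`, `w` of the path, the signs of `f` on branches are needed.
If `A` and `B` are disjoint vertex sets, the edges leaving `A` lead to nonpositive values and those
leaving `B` to nonnegative ones, then a combination of the positive part of `f` on `A` and the
negative part on `B` attains the minimum of the Rayleigh quotient, so it is an eigenvector again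
(`exists_truncated_eigenvector`). Consequently, if `f p > 0` and `f c ≤ 0` for an edge `pc`, then
`f` is positive on the whole `p`-side of `pc` (`pos_on_side`), and summing `L f = α f` over a
branch (`flow`) shows that `f` increases away from `c`. Three cases remain:

* `v` and `w` are both positive (`no_drop_pos`): the exchange applies to `f` itself.
* `f v = 0 < f w` (`no_drop_zero_pos`): `f` is replaced by a Fiedler vector supported on two
  branches at `v`, one positive (containing `w`) and one negative; it vanishes on the others, and
  the branches to be moved are chosen among these.
* `f v = f w = 0`: one of the two is not the zero `c` of `f` having a nonzero neighbour. With a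
  Fiedler vector supported on two branches at `c`, all branches at such a further zero that point
  away from `c` could be moved to a leaf with positive value (`no_second_zero`).

The nonpositive half follows by replacing `f` with `-f`.
-/

open Matrix BigOperators
open scoped Classical

/-- Weighted Laplacian of a weight function. -/
noncomputable def wLap {V : Type*} [Fintype V] [DecidableEq V] (w : V → V → ℝ) : Matrix V V ℝ :=
  Matrix.diagonal (fun v => ∑ u, w v u) - Matrix.of w

/-- The `k`-th smallest eigenvalue of a real matrix (0 if not Hermitian / out of range). -/
noncomputable def kthEig {W : Type*} [Fintype W] [DecidableEq W] (A : Matrix W W ℝ) (k : ℕ) : ℝ :=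
  if hA : A.IsHermitian then
    if h : k < Fintype.card W then
      (let g : Fin (Fintype.card W) → ℝ := hA.eigenvalues ∘ (Fintype.equivFin W).symm
       (g ∘ Tuple.sort g) ⟨k, h⟩)
    else 0
  else 0

noncomputable def minEig {W : Type*} [Fintype W] [DecidableEq W] (A : Matrix W W ℝ) : ℝ := kthEig A 0

/-- algebraic connectivity of a simple graph -/
noncomputable def algConn {V : Type*} [Fintype V] [DecidableEq V] (G : SimpleGraph V) : ℝ :=
  kthEig (G.lapMatrix ℝ) 1

/-- Dirichlet matrix: weighted Laplacian restricted to an interior set `S`. -/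
noncomputable def dirichletMatrix {V : Type*} [Fintype V] [DecidableEq V]
    (w : V → V → ℝ) (S : Set V) : Matrix S S ℝ :=
  (wLap w).submatrix Subtype.val Subtype.val

noncomputable def degSeq {V : Type*} [Fintype V] [DecidableEq V] (G : SimpleGraph V) : Multiset ℕ :=
  Finset.univ.val.map (fun v => G.degree v)

/-! ### Spectral theory of the Laplacian -/

/-- With the eigenvalues sorted increasingly, `i` indexes the smallest one and `j` the second. -/
lemma exists_kthEig_one {W : Type*} [Fintype W] [DecidableEq W] {A : Matrix W W ℝ}
    (hA : A.IsHermitian) (hc : 1 < Fintype.card W) :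
    ∃ i j : W, i ≠ j ∧ hA.eigenvalues j = kthEig A 1 ∧ hA.eigenvalues i ≤ kthEig A 1 ∧
      ∀ k, k ≠ i → kthEig A 1 ≤ hA.eigenvalues k := by
  set e := Fintype.equivFin W
  set g : Fin (Fintype.card W) → ℝ := hA.eigenvalues ∘ e.symm with hg
  have hk : kthEig A 1 = (g ∘ Tuple.sort g) ⟨1, hc⟩ := by
    simp only [kthEig, dif_pos hA, dif_pos hc]; rfl
  have hm : Monotone (g ∘ Tuple.sort g) := Tuple.monotone_sort g
  refine ⟨e.symm (Tuple.sort g ⟨0, by omega⟩), e.symm (Tuple.sort g ⟨1, hc⟩), ?_, ?_, ?_, ?_⟩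
  · intro h
    have := (Tuple.sort g).injective (e.symm.injective h)
    simp at this
  · rw [hk]; rfl
  · rw [hk]
    exact hm (show (⟨0, _⟩ : Fin (Fintype.card W)) ≤ ⟨1, hc⟩ by simp [Fin.le_def])
  · intro k hki
    rw [hk]
    obtain ⟨m, rfl⟩ : ∃ m, k = e.symm (Tuple.sort g m) :=
      ⟨(Tuple.sort g).symm (e k), by simp⟩
    have hm0 : m ≠ ⟨0, by omega⟩ := by rintro rfl; exact hki rfl
    have : (⟨1, hc⟩ : Fin (Fintype.card W)) ≤ m := by
      rw [Fin.le_def]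
      have : m.val ≠ 0 := fun h => hm0 (Fin.ext h)
      show 1 ≤ m.val
      omega
    exact hm this

lemma parseval_dot {W : Type*} [Fintype W] [DecidableEq W] {A : Matrix W W ℝ}
    (hA : A.IsHermitian) (x y : W → ℝ) :
    x ⬝ᵥ y = ∑ i, ((hA.eigenvectorBasis i : W → ℝ) ⬝ᵥ x) *
      ((hA.eigenvectorBasis i : W → ℝ) ⬝ᵥ y) := by
  have h := hA.eigenvectorBasis.sum_inner_mul_inner (WithLp.toLp 2 x) (WithLp.toLp 2 y)
  simp only [EuclideanSpace.inner_eq_star_dotProduct, star_trivial] at h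
  rw [dotProduct_comm x y, ← h]
  refine Finset.sum_congr rfl fun i _ => ?_
  rw [dotProduct_comm y]

lemma dot_mulVec_eq_sum {W : Type*} [Fintype W] [DecidableEq W] {A : Matrix W W ℝ}
    (hA : A.IsHermitian) (x : W → ℝ) :
    x ⬝ᵥ A *ᵥ x = ∑ i, hA.eigenvalues i * ((hA.eigenvectorBasis i : W → ℝ) ⬝ᵥ x) ^ 2 := by
  rw [parseval_dot hA]
  refine Finset.sum_congr rfl fun i _ => ?_
  have hT : Aᵀ = A := by simpa [Matrix.IsHermitian, conjTranspose_eq_transpose_of_trivial] using hA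
  rw [dotProduct_mulVec, ← mulVec_transpose, hT, hA.mulVec_eigenvectorBasis]
  simp only [smul_dotProduct, smul_eq_mul]
  ring

section graph
variable {V : Type*} [Fintype V] [DecidableEq V]

lemma lap_apply (G : SimpleGraph V) (x : V → ℝ) (v : V) :
    (G.lapMatrix ℝ *ᵥ x) v = ∑ y, if G.Adj v y then x v - x y else 0 := by
  rw [SimpleGraph.lapMatrix_mulVec_apply, SimpleGraph.degree_eq_sum_if_adj, Finset.sum_mul,
    SimpleGraph.neighborFinset_eq_filter, Finset.sum_filter, ← Finset.sum_sub_distrib]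
  refine Finset.sum_congr rfl fun y _ => ?_
  split_ifs <;> simp

lemma dot_lap (G : SimpleGraph V) (x : V → ℝ) :
    x ⬝ᵥ (G.lapMatrix ℝ *ᵥ x) = (∑ i, ∑ j, if G.Adj i j then (x i - x j) ^ 2 else 0) / 2 := by
  rw [← Matrix.toLinearMap₂'_apply', SimpleGraph.lapMatrix_toLinearMap₂']

lemma lap_symm (G : SimpleGraph V) (x y : V → ℝ) :
    x ⬝ᵥ (G.lapMatrix ℝ *ᵥ y) = y ⬝ᵥ (G.lapMatrix ℝ *ᵥ x) := by
  rw [dotProduct_mulVec, ← mulVec_transpose, (G.isSymm_lapMatrix (R := ℝ)).eq, dotProduct_comm]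

lemma sum_lap (G : SimpleGraph V) (x : V → ℝ) : ∑ v, (G.lapMatrix ℝ *ᵥ x) v = 0 := by
  have h := lap_symm G (fun _ => 1) x
  rw [show (G.lapMatrix ℝ *ᵥ fun _ => (1:ℝ)) = 0 from G.lapMatrix_mulVec_const_eq_zero] at h
  simpa [dotProduct] using h

/-- One direction of Courant–Fischer: some nonzero combination of the constant vector and `x`
is orthogonal to the lowest eigenvector, and the constant contributes no energy. -/
lemma algConn_le_of_sum_zero (G : SimpleGraph V) (hc : 1 < Fintype.card V) (x : V → ℝ)
    (hx : ∑ v, x v = 0) : algConn G * (x ⬝ᵥ x) ≤ x ⬝ᵥ (G.lapMatrix ℝ *ᵥ x) := by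
  by_contra! hlt
  have hA : (G.lapMatrix ℝ).IsHermitian := G.isHermitian_lapMatrix ℝ
  obtain ⟨i, j, -, -, -, hk⟩ := exists_kthEig_one hA hc
  change ∀ k, k ≠ i → algConn G ≤ _ at hk
  set b : V → ℝ := ⇑(hA.eigenvectorBasis i) with hb
  have hpos : 0 ≤ x ⬝ᵥ (G.lapMatrix ℝ *ᵥ x) := by rw [dot_lap]; positivity
  have hxx : 0 ≤ x ⬝ᵥ x := by simpa using dotProduct_star_self_nonneg x
  have hα : 0 < algConn G := by
    by_contra! h; nlinarith
  obtain ⟨p, q, hpq, horth⟩ : ∃ p q : ℝ, (p ≠ 0 ∨ q ≠ 0) ∧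
      p * (b ⬝ᵥ fun _ => (1:ℝ)) + q * (b ⬝ᵥ x) = 0 := by
    by_cases h : (b ⬝ᵥ x) = 0
    · exact ⟨0, 1, by simp, by simp [h]⟩
    · exact ⟨b ⬝ᵥ x, -(b ⬝ᵥ fun _ => (1:ℝ)), Or.inl h, by ring⟩
  set w : V → ℝ := p • (fun _ => (1:ℝ)) + q • x with hw
  have hbw : b ⬝ᵥ w = 0 := by
    rw [hw, dotProduct_add, dotProduct_smul, dotProduct_smul]; simpa using horth
  have h1 : algConn G * (w ⬝ᵥ w) ≤ w ⬝ᵥ (G.lapMatrix ℝ *ᵥ w) := by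
    rw [dot_mulVec_eq_sum hA, parseval_dot hA, Finset.mul_sum]
    refine Finset.sum_le_sum fun k _ => ?_
    by_cases hki : k = i
    · rw [hki, ← hb, hbw]; simp
    · have := hk k hki
      rw [← sq]
      exact mul_le_mul_of_nonneg_right this (sq_nonneg _)
  have h2 : w ⬝ᵥ (G.lapMatrix ℝ *ᵥ w) = q ^ 2 * (x ⬝ᵥ (G.lapMatrix ℝ *ᵥ x)) := by
    rw [dot_lap, dot_lap, mul_div_assoc', Finset.mul_sum]
    congr 1
    refine Finset.sum_congr rfl fun a _ => ?_
    rw [Finset.mul_sum]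
    refine Finset.sum_congr rfl fun c _ => ?_
    split_ifs
    · simp [hw]; ring
    · simp
  have h3 : w ⬝ᵥ w = p ^ 2 * Fintype.card V + q ^ 2 * (x ⬝ᵥ x) := by
    have : w ⬝ᵥ w = ∑ v, (p ^ 2 + 2 * p * q * x v + q ^ 2 * (x v * x v)) := by
      refine Finset.sum_congr rfl fun a _ => ?_
      simp [hw]; ring
    rw [this, Finset.sum_add_distrib, Finset.sum_add_distrib, ← Finset.mul_sum, hx,
      ← Finset.mul_sum]
    simp [dotProduct]; ring
  rw [h2, h3] at h1
  have hcard : (0:ℝ) < Fintype.card V := by exact_mod_cast (by omega)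
  rcases eq_or_ne q 0 with hq | hq
  · have hp : p ≠ 0 := by tauto
    have : 0 < algConn G * (p ^ 2 * Fintype.card V) := by positivity
    simp [hq] at h1; linarith
  · have hq2 : 0 < q ^ 2 := by positivity
    have : 0 ≤ algConn G * (p ^ 2 * Fintype.card V) := by positivity
    nlinarith

/-- Equality in the variational principle is attained only by eigenvectors: perturb `x` in the
direction of its residual `L x - α x`. -/
lemma eigen_of_le (G : SimpleGraph V) (hc : 1 < Fintype.card V) (x : V → ℝ)
    (hx : ∑ v, x v = 0) (hle : x ⬝ᵥ (G.lapMatrix ℝ *ᵥ x) ≤ algConn G * (x ⬝ᵥ x)) :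
    G.lapMatrix ℝ *ᵥ x = algConn G • x := by
  set α := algConn G
  set y : V → ℝ := G.lapMatrix ℝ *ᵥ x - α • x with hy
  have hys : ∑ v, y v = 0 := by
    simp [hy, Finset.sum_sub_distrib, sum_lap, ← Finset.mul_sum, hx]
  have key : ∀ t : ℝ, 0 ≤ -2 * t * (y ⬝ᵥ y) +
      t ^ 2 * (y ⬝ᵥ (G.lapMatrix ℝ *ᵥ y) - α * (y ⬝ᵥ y)) := by
    intro t
    have h := algConn_le_of_sum_zero G hc (x - t • y)
      (by simp [Finset.sum_sub_distrib, ← Finset.mul_sum, hx, hys])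
    have e1 : y ⬝ᵥ y = y ⬝ᵥ (G.lapMatrix ℝ *ᵥ x) - α * (y ⬝ᵥ x) := by
      conv_lhs => rw [hy, dotProduct_sub, dotProduct_smul, ← hy]
      rfl
    have e2 := lap_symm G x y
    have e3 := dotProduct_comm x y
    simp only [mulVec_sub, mulVec_smul, dotProduct_sub, sub_dotProduct, smul_dotProduct,
      dotProduct_smul, smul_eq_mul, e2, e3] at h
    change α * _ ≤ _ at h
    linear_combination h + hle + 2 * t * e1
  have hyy : 0 ≤ y ⬝ᵥ y := by simpa using dotProduct_star_self_nonneg y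
  have hy0 : y ⬝ᵥ y = 0 := by
    by_contra hne
    have hp : 0 < y ⬝ᵥ y := lt_of_le_of_ne hyy (Ne.symm hne)
    set Q := y ⬝ᵥ (G.lapMatrix ℝ *ᵥ y) - α * (y ⬝ᵥ y)
    have hQ := key ((y ⬝ᵥ y) / (|Q| + 1))
    have hd : 0 < |Q| + 1 := by positivity
    have : (y ⬝ᵥ y) / (|Q| + 1) * Q ≤ y ⬝ᵥ y := by
      rw [div_mul_eq_mul_div, div_le_iff₀ hd]
      nlinarith [le_abs_self Q]
    have ht : 0 < (y ⬝ᵥ y) / (|Q| + 1) := by positivity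
    nlinarith [mul_pos ht hp]
  have := (dotProduct_self_eq_zero).1 hy0
  exact sub_eq_zero.1 this

lemma algConn_pos (G : SimpleGraph V) (hc : 1 < Fintype.card V) (hG : G.Connected) :
    0 < algConn G := by
  by_contra! hle
  have hA : (G.lapMatrix ℝ).IsHermitian := G.isHermitian_lapMatrix ℝ
  obtain ⟨i, j, hij, hj, hi, -⟩ := exists_kthEig_one hA hc
  change _ = algConn G at hj
  change _ ≤ algConn G at hi
  have hconst : ∀ k, hA.eigenvalues k ≤ 0 → ∃ a : ℝ, ∀ v, hA.eigenvectorBasis k v = a := by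
    intro k hk
    have h0 := (SimpleGraph.posSemidef_lapMatrix ℝ G).eigenvalues_nonneg k
    have h0' : hA.eigenvalues k = 0 := le_antisymm hk h0
    have h := hA.mulVec_eigenvectorBasis k
    rw [h0', zero_smul, SimpleGraph.lapMatrix_mulVec_eq_zero_iff_forall_reachable] at h
    obtain ⟨v0⟩ := hG.nonempty
    exact ⟨hA.eigenvectorBasis k v0, fun v => h v v0 (hG.preconnected v v0)⟩
  obtain ⟨a, ha⟩ := hconst i (hi.trans hle)
  obtain ⟨a', ha'⟩ := hconst j (hj.le.trans hle)
  have o := hA.eigenvectorBasis.orthonormal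
  have o1 := o.2 hij
  have n1 := o.1 i
  have n2 := o.1 j
  rw [EuclideanSpace.norm_eq] at n1 n2
  simp [PiLp.inner_apply, ha, ha'] at o1 n1 n2
  have : (Fintype.card V : ℝ) ≠ 0 := by
    have : Fintype.card V ≠ 0 := by omega
    exact_mod_cast this
  rcases o1 with h | h | h
  · omega
  · simp [h] at n2
  · simp [h] at n1

/-! ### Sides of an edge of a tree -/

/-- The vertices on the `p`-side of the edge `pc`: those reachable from `p` once `pc` has been
deleted. In a tree it is a branch at `c`, and its complement is `side T c p`. -/
def side (T : SimpleGraph V) (p c : V) : Set V := {x | (T.deleteEdges {s(p, c)}).Reachable p x}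

lemma mem_side_self (T : SimpleGraph V) (p c : V) : p ∈ side T p c :=
  SimpleGraph.Reachable.refl _

lemma side_cut {T : SimpleGraph V} {p c : V} (hc : c ∉ side T p c) {x y : V}
    (hx : x ∈ side T p c) (hy : y ∉ side T p c) (hxy : T.Adj x y) : x = p ∧ y = c := by
  by_cases he : s(x, y) = s(p, c)
  · rcases Sym2.eq_iff.1 he with h | ⟨rfl, rfl⟩
    · exact h
    · exact absurd (mem_side_self T _ _) hy
  · exfalso
    apply hy
    have : (T.deleteEdges {s(p, c)}).Adj x y := by
      rw [SimpleGraph.deleteEdges_adj]; exact ⟨hxy, he⟩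
    exact SimpleGraph.Reachable.trans hx this.reachable

lemma not_mem_side {T : SimpleGraph V} (hT : T.IsTree) {p c : V} (h : T.Adj p c) :
    c ∉ side T p c := by
  have := SimpleGraph.isAcyclic_iff_forall_adj_isBridge.1 hT.isAcyclic h
  exact this

/-- Induction inside a side: a set containing `p` and closed under adjacency within the side
contains the whole side. -/
lemma side_induction {T : SimpleGraph V} {p c : V} (D : V → Prop)
    (hp : D p)
    (hD : ∀ x y, x ∈ side T p c → y ∈ side T p c → T.Adj x y → D x → D y) :
    ∀ x ∈ side T p c, D x := by
  have aux : ∀ (a b : V) (w : (T.deleteEdges {s(p, c)}).Walk a b), a ∈ side T p c → D a → D b := by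
    intro a b w
    induction w with
    | nil => exact fun _ h => h
    | cons hadj q ih =>
      intro ha hDa
      have hb := SimpleGraph.Reachable.trans ha hadj.reachable
      exact ih hb (hD _ _ ha hb (SimpleGraph.deleteEdges_le _ hadj) hDa)
  rintro x ⟨w⟩
  exact aux _ _ w (mem_side_self _ _ _) hp

lemma conn_induction {T : SimpleGraph V} (hT : T.Connected) (D : V → Prop) {p : V} (hp : D p)
    (hD : ∀ x y, T.Adj x y → D x → D y) (x : V) : D x := by
  obtain ⟨w⟩ := hT.preconnected p x
  induction w with
  | nil => exact hp
  | cons hadj q ih => exact ih (hD _ _ hadj hp)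

lemma mem_side_or {T : SimpleGraph V} (hT : T.IsTree) {p c : V} (x : V) :
    x ∈ side T p c ∨ x ∈ side T c p := by
  refine conn_induction hT.connected (fun x => x ∈ side T p c ∨ x ∈ side T c p)
    (Or.inl (mem_side_self T p c)) ?_ x
  intro x y hxy hx
  by_cases he : s(x, y) = s(p, c)
  · rcases Sym2.eq_iff.1 he with ⟨-, rfl⟩ | ⟨-, rfl⟩
    · exact Or.inr (mem_side_self _ _ _)
    · exact Or.inl (mem_side_self _ _ _)
  · have h1 : (T.deleteEdges {s(p, c)}).Adj x y := by
      rw [SimpleGraph.deleteEdges_adj]; exact ⟨hxy, he⟩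
    have h2 : (T.deleteEdges {s(c, p)}).Adj x y := by
      rw [Sym2.eq_swap]; exact h1
    exact hx.imp (fun h => SimpleGraph.Reachable.trans h h1.reachable)
      (fun h => SimpleGraph.Reachable.trans h h2.reachable)

lemma side_compl {T : SimpleGraph V} (hT : T.IsTree) {p c : V} (h : T.Adj p c) (x : V) :
    x ∉ side T p c ↔ x ∈ side T c p := by
  refine ⟨fun hx => (mem_side_or hT x).resolve_left hx, fun hx => ?_⟩
  refine side_induction (fun x => x ∉ side T p c) (not_mem_side hT h) ?_ x hx
  intro x y hx hy hxy hxn hyn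
  obtain ⟨rfl, rfl⟩ := side_cut (not_mem_side hT h) hyn hxn hxy.symm
  exact not_mem_side hT h.symm hy

lemma side_subset {T : SimpleGraph V} (hT : T.IsTree) {p c t y : V} (h : T.Adj p c)
    (h' : T.Adj t y) (hp : p ∈ side T t y) (hn : t ∉ side T p c ∨ y ∉ side T p c) :
    side T p c ⊆ side T t y := by
  refine side_induction (fun x => x ∈ side T t y) hp ?_
  intro a b ha hb hab haD
  by_contra hbD
  obtain ⟨rfl, rfl⟩ := side_cut (not_mem_side hT h') haD hbD hab
  tauto

/-- Distinct branches at `v` are disjoint. -/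
lemma side_disjoint {T : SimpleGraph V} (hT : T.IsTree) {v s t x : V} (hs : T.Adj v s)
    (ht : T.Adj v t) (hst : s ≠ t) (hx : x ∈ side T s v) : x ∉ side T t v := by
  rw [side_compl hT ht.symm]
  refine side_subset hT hs.symm ht ?_ (Or.inl (not_mem_side hT hs.symm)) hx
  rw [← side_compl hT ht.symm]
  intro hs'
  exact hst (side_cut (not_mem_side hT ht.symm) hs' (not_mem_side hT ht.symm) hs.symm).1

lemma exists_branch {T : SimpleGraph V} (hT : T.IsTree) {v x : V} (hx : x ≠ v) :
    ∃ t, T.Adj v t ∧ x ∈ side T t v := by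
  have := conn_induction hT.connected (fun x => x ≠ v → ∃ t, T.Adj v t ∧ x ∈ side T t v)
    (p := v) (fun h => absurd rfl h) ?_ x hx
  · exact this
  · intro a b hab ha hb
    by_cases hav : a = v
    · subst hav
      exact ⟨b, hab, mem_side_self _ _ _⟩
    · obtain ⟨t, hvt, hat⟩ := ha hav
      refine ⟨t, hvt, ?_⟩
      by_contra hbt
      exact hb (side_cut (not_mem_side hT hvt.symm) hat hbt hab).2

lemma mem_side_of_dist_lt {T : SimpleGraph V} (hT : T.IsTree) {v w z : V} (h : T.Adj v w)
    (hd : T.dist z v < T.dist z w) : z ∈ side T v w := by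
  by_contra hz
  rw [side_compl hT h] at hz
  have aux : ∀ (a b : V) (q : T.Walk a b), a ∈ side T w v → b ∉ side T w v →
      T.dist a w + 1 ≤ q.length := by
    intro a b q
    induction q with
    | nil => exact fun h1 h2 => absurd h1 h2
    | @cons a a' b hadj q ih =>
      intro ha hb
      rw [SimpleGraph.Walk.length_cons]
      by_cases ha' : a' ∈ side T w v
      · have h1 := ih ha' hb
        have h2 := hT.connected.dist_triangle (u := a) (v := a') (w := w)
        have h3 : T.dist a a' = 1 := SimpleGraph.dist_eq_one_iff_adj.2 hadj
        omega
      · obtain ⟨rfl, -⟩ := side_cut (not_mem_side hT h.symm) ha ha' hadj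
        simp
  obtain ⟨q, hq⟩ := hT.connected.exists_walk_length_eq_dist z v
  have := aux _ _ q hz (not_mem_side hT h.symm)
  omega

/-- A vertex of the side farthest from `c` is a leaf. -/
lemma exists_leaf {T : SimpleGraph V} (hT : T.IsTree) {p c : V} (h : T.Adj p c) :
    ∃ x ∈ side T p c, T.degree x = 1 := by
  obtain ⟨x, hx, hmax⟩ := (Set.toFinite (side T p c)).exists_maximalFor (fun x => T.dist c x)
    (side T p c) ⟨p, mem_side_self T p c⟩
  refine ⟨x, hx, ?_⟩
  have hxc : c ≠ x := by rintro rfl; exact not_mem_side hT h hx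
  obtain ⟨t, hxt, hct⟩ := exists_branch hT hxc
  rw [← SimpleGraph.card_neighborFinset_eq_degree, Finset.card_eq_one]
  refine ⟨t, ?_⟩
  ext y
  simp only [SimpleGraph.mem_neighborFinset, Finset.mem_singleton]
  refine ⟨fun hxy => ?_, fun h => h ▸ hxt⟩
  by_contra hyt
  have hcy : c ∉ side T y x := fun hcy => side_disjoint hT hxy hxt hyt hcy hct
  have hyC : y ∈ side T p c := by
    by_contra hy
    obtain ⟨-, rfl⟩ := side_cut (not_mem_side hT h) hx hy hxy
    exact hcy (mem_side_self _ _ _)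
  -- otherwise `c` would lie beyond the edge `xy`
  have hlt : ¬ T.dist c y < T.dist c x := fun hlt => hcy (mem_side_of_dist_lt hT hxy.symm hlt)
  have hle : T.dist c y ≤ T.dist c x := by
    by_contra hh
    have := hmax hyC (le_of_not_ge hh)
    simp only at this
    omega
  exact hT.dist_ne_of_adj c hxy (by omega)

/-! ### Moving branches from one vertex to another -/

/-- The graph obtained from `T` by detaching the branches with roots `N` from their common
neighbour `v` and attaching them to `w`. The set `S` is the union of these branches, so that the
edges of `T` leaving `S` are exactly those between `N` and `v`. -/
def moveGraph (T : SimpleGraph V) (S : Set V) (N : Finset V) (w : V) (hw : w ∉ S)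
    (hN : ∀ s ∈ N, s ∈ S) : SimpleGraph V where
  Adj x y := (T.Adj x y ∧ (x ∈ S ↔ y ∈ S)) ∨ (x ∈ N ∧ y = w) ∨ (x = w ∧ y ∈ N)
  symm := ⟨by
    rintro x y (⟨h, h'⟩ | ⟨h, h'⟩ | ⟨h, h'⟩)
    · exact Or.inl ⟨h.symm, h'.symm⟩
    · exact Or.inr (Or.inr ⟨h', h⟩)
    · exact Or.inr (Or.inl ⟨h', h⟩)⟩
  loopless := ⟨by
    rintro x (⟨h, -⟩ | ⟨h, rfl⟩ | ⟨rfl, h⟩)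
    · exact T.loopless.irrefl _ h
    · exact hw (hN _ h)
    · exact hw (hN _ h)⟩

section move
variable {T : SimpleGraph V} {S : Set V} {N : Finset V} {v w : V}

/-- Sums over the edges of `T`, split into edges that do not leave `S` and edges at `v`. -/
lemma sum_adj_split (hv : v ∉ S) (hN : ∀ s ∈ N, s ∈ S ∧ T.Adj v s)
    (hcut : ∀ x y, x ∈ S → y ∉ S → T.Adj x y → x ∈ N ∧ y = v) (F : V → V → ℝ) (x : V) :
    (∑ y, if T.Adj x y then F x y else 0) =
      (∑ y, if T.Adj x y ∧ (x ∈ S ↔ y ∈ S) then F x y else 0) +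
      (if x ∈ N then F x v else 0) + (if x = v then ∑ s ∈ N, F x s else 0) := by
  have h1 : (if x ∈ N then F x v else 0) = ∑ y, if x ∈ N ∧ y = v then F x y else 0 := by
    by_cases h : x ∈ N <;> simp [h]
  have h2 : (if x = v then ∑ s ∈ N, F x s else 0) =
      ∑ y, if x = v ∧ y ∈ N then F x y else 0 := by
    by_cases h : x = v <;> simp [h]
  rw [h1, h2, ← Finset.sum_add_distrib, ← Finset.sum_add_distrib]
  refine Finset.sum_congr rfl fun y _ => ?_
  by_cases hA : x ∈ N ∧ y = v
  · obtain ⟨hx, rfl⟩ := hA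
    have hxv : x ≠ y := by rintro rfl; exact hv (hN _ hx).1
    simp [hx, (hN _ hx).1, (hN _ hx).2.symm, hv, hxv]
  · by_cases hB : x = v ∧ y ∈ N
    · obtain ⟨rfl, hy⟩ := hB
      simp [hy, (hN _ hy).1, (hN _ hy).2, hv, hA]
    · rw [if_neg hA, if_neg hB, add_zero, add_zero]
      refine if_congr ?_ rfl rfl
      refine ⟨fun h => ⟨h, ?_⟩, fun h => h.1⟩
      by_contra hne
      by_cases hxS : x ∈ S
      · exact hA (hcut x y hxS (by tauto) h)
      · have := hcut y x (by tauto) hxS h.symm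
        tauto

lemma sum_move_split (hw : w ∉ S) (hN : ∀ s ∈ N, s ∈ S) (F : V → V → ℝ) (x : V) :
    (∑ y, if (moveGraph T S N w hw hN).Adj x y then F x y else 0) =
      (∑ y, if T.Adj x y ∧ (x ∈ S ↔ y ∈ S) then F x y else 0) +
      (if x ∈ N then F x w else 0) + (if x = w then ∑ s ∈ N, F x s else 0) := by
  have h1 : (if x ∈ N then F x w else 0) = ∑ y, if x ∈ N ∧ y = w then F x y else 0 := by
    by_cases h : x ∈ N <;> simp [h]
  have h2 : (if x = w then ∑ s ∈ N, F x s else 0) =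
      ∑ y, if x = w ∧ y ∈ N then F x y else 0 := by
    by_cases h : x = w <;> simp [h]
  rw [h1, h2, ← Finset.sum_add_distrib, ← Finset.sum_add_distrib]
  refine Finset.sum_congr rfl fun y _ => ?_
  have hdef : (moveGraph T S N w hw hN).Adj x y ↔
    (T.Adj x y ∧ (x ∈ S ↔ y ∈ S)) ∨ (x ∈ N ∧ y = w) ∨ (x = w ∧ y ∈ N) := Iff.rfl
  by_cases hA : x ∈ N ∧ y = w
  · obtain ⟨hx, rfl⟩ := hA
    have hxv : x ≠ y := by rintro rfl; exact hw (hN _ hx)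
    simp [hdef, hx, hN _ hx, hw, hxv]
  · by_cases hB : x = w ∧ y ∈ N
    · obtain ⟨rfl, hy⟩ := hB
      simp [hdef, hy, hN _ hy, hw, hA]
    · simp only [hdef, hA, hB, or_false, if_false, add_zero]

lemma degree_eq_sum (G : SimpleGraph V) (x : V) :
    (G.degree x : ℝ) = ∑ y, if G.Adj x y then (1:ℝ) else 0 :=
  SimpleGraph.degree_eq_sum_if_adj G x

/-- Moving `deg v - deg w` branches interchanges the degrees of `v` and `w`. -/
lemma degree_move (hv : v ∉ S) (hw : w ∉ S) (hvw : v ≠ w) (hN : ∀ s ∈ N, s ∈ S ∧ T.Adj v s)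
    (hcut : ∀ x y, x ∈ S → y ∉ S → T.Adj x y → x ∈ N ∧ y = v)
    (hdeg : N.card + T.degree w = T.degree v) (x : V) :
    (moveGraph T S N w hw fun s hs => (hN s hs).1).degree x = T.degree (Equiv.swap v w x) := by
  have hdeg' : (N.card : ℝ) + T.degree w = T.degree v := by exact_mod_cast hdeg
  set M := moveGraph T S N w hw fun s hs => (hN s hs).1 with hMdef
  have hT : ∀ x, (T.degree x : ℝ) = _ := fun x =>
    (degree_eq_sum T x).trans (sum_adj_split hv hN hcut (fun _ _ => (1:ℝ)) x)
  have hM : ∀ x, (M.degree x : ℝ) = _ := fun x =>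
    (degree_eq_sum M x).trans
      (sum_move_split (T := T) hw (fun s hs => (hN s hs).1) (fun _ _ => (1:ℝ)) x)
  have hvN : v ∉ N := fun h => hv (hN _ h).1
  have hwN : w ∉ N := fun h => hw (hN _ h).1
  rify
  by_cases h1 : x = v
  · subst h1
    have a := hT x
    have b := hM x
    simp only [hvN, hvw, if_true, if_false, add_zero, Finset.sum_const, nsmul_eq_mul,
      mul_one] at a b
    rw [Equiv.swap_apply_left, b]; linarith
  · by_cases h2 : x = w
    · subst h2
      have a := hT x
      have b := hM x
      simp only [hwN, hvw.symm, if_true, if_false, add_zero, Finset.sum_const, nsmul_eq_mul,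
        mul_one] at a b
      rw [Equiv.swap_apply_right, b]; linarith
    · rw [Equiv.swap_apply_of_ne_of_ne h1 h2, hT, hM]
      simp [h1, h2]

/-- Paths of `T` between vertices outside `S` avoid `S`, so they survive; the moved branches are
reached through `w`. -/
lemma move_connected (hT : T.Connected) (hv : v ∉ S) (hw : w ∉ S)
    (hN : ∀ s ∈ N, s ∈ S ∧ T.Adj v s)
    (hcut : ∀ x y, x ∈ S → y ∉ S → T.Adj x y → x ∈ N ∧ y = v) :
    (moveGraph T S N w hw fun s hs => (hN s hs).1).Connected := by
  set M := moveGraph T S N w hw fun s hs => (hN s hs).1 with hM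
  -- a walk of `T` entering `S` and coming back passes twice through `v`
  have aux1 : ∀ (a b : V) (q : T.Walk a b), a ∈ S → b ∉ S → v ∈ q.support := by
    intro a b q
    induction q with
    | nil => exact fun h1 h2 => absurd h1 h2
    | @cons a a' b hadj q ih =>
      intro ha hb
      rw [SimpleGraph.Walk.support_cons]
      by_cases ha' : a' ∈ S
      · exact List.mem_cons_of_mem _ (ih ha' hb)
      · obtain ⟨-, rfl⟩ := hcut _ _ ha ha' hadj
        exact List.mem_cons_of_mem _ q.start_mem_support
  have aux2 : ∀ (a b : V) (q : T.Walk a b), q.IsPath → a ∉ S → b ∉ S → M.Reachable a b := by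
    intro a b q
    induction q with
    | nil => exact fun _ _ _ => SimpleGraph.Reachable.refl _
    | @cons a a' b hadj q ih =>
      intro hq ha hb
      rw [SimpleGraph.Walk.cons_isPath_iff] at hq
      have ha' : a' ∉ S := by
        intro ha'
        obtain ⟨-, rfl⟩ := hcut _ _ ha' ha hadj.symm
        exact hq.2 (aux1 _ _ q ha' hb)
      have : M.Adj a a' := Or.inl ⟨hadj, by tauto⟩
      exact this.reachable.trans (ih hq.1 ha' hb)
  have hvw : M.Reachable v w := by
    obtain ⟨q, hq⟩ := hT.exists_isPath v w
    exact aux2 _ _ q hq hv hw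
  have hr : ∀ x, M.Reachable v x := by
    refine conn_induction hT _ (SimpleGraph.Reachable.refl _) ?_
    intro x y hxy hx
    by_cases h : x ∈ S ↔ y ∈ S
    · have : M.Adj x y := Or.inl ⟨hxy, h⟩
      exact hx.trans this.reachable
    · by_cases hxS : x ∈ S
      · obtain ⟨-, rfl⟩ := hcut x y hxS (by tauto) hxy
        exact SimpleGraph.Reachable.refl _
      · obtain ⟨hy, -⟩ := hcut y x (by tauto) hxS hxy.symm
        have : M.Adj w y := Or.inr (Or.inr ⟨rfl, hy⟩)
        exact hvw.trans this.reachable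
  exact { preconnected := fun a b => (hr a).symm.trans (hr b), nonempty := ⟨v⟩ }

lemma move_isTree (hT : T.IsTree) (hv : v ∉ S) (hw : w ∉ S) (hvw : v ≠ w)
    (hN : ∀ s ∈ N, s ∈ S ∧ T.Adj v s)
    (hcut : ∀ x y, x ∈ S → y ∉ S → T.Adj x y → x ∈ N ∧ y = v)
    (hdeg : N.card + T.degree w = T.degree v) :
    (moveGraph T S N w hw fun s hs => (hN s hs).1).IsTree := by
  rw [SimpleGraph.isTree_iff_connected_and_card]
  refine ⟨move_connected hT.connected hv hw hN hcut, ?_⟩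
  have h1 := T.sum_degrees_eq_twice_card_edges
  have h2 := (moveGraph T S N w hw fun s hs => (hN s hs).1).sum_degrees_eq_twice_card_edges
  have h3 := hT.card_edgeFinset
  rw [Finset.sum_congr rfl fun x _ => degree_move hv hw hvw hN hcut hdeg x,
    Equiv.sum_comp (Equiv.swap v w) (fun x => T.degree x)] at h2
  rw [Nat.card_eq_fintype_card, Nat.card_eq_fintype_card, ← SimpleGraph.edgeFinset_card]
  omega

lemma move_degSeq (hv : v ∉ S) (hw : w ∉ S) (hvw : v ≠ w) (hN : ∀ s ∈ N, s ∈ S ∧ T.Adj v s)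
    (hcut : ∀ x y, x ∈ S → y ∉ S → T.Adj x y → x ∈ N ∧ y = v)
    (hdeg : N.card + T.degree w = T.degree v) :
    degSeq (moveGraph T S N w hw fun s hs => (hN s hs).1) = degSeq T := by
  unfold degSeq
  rw [Multiset.map_congr rfl fun x _ => degree_move hv hw hvw hN hcut hdeg x]
  have : (Finset.univ.val.map fun x => T.degree (Equiv.swap v w x)) =
      (Finset.univ.val.map (Equiv.swap v w)).map fun x => T.degree x := by
    rw [Multiset.map_map]; rfl
  rw [this]
  congr 1
  exact congrArg Finset.val (Finset.map_univ_equiv (Equiv.swap v w))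

/-- Translating `g` on the moved branches by `g w - g v` preserves the energy: the edges
between `N` and `v` become edges between `N` and `w` with the same differences. -/
lemma energy_move (hv : v ∉ S) (hw : w ∉ S) (hN : ∀ s ∈ N, s ∈ S ∧ T.Adj v s)
    (hcut : ∀ x y, x ∈ S → y ∉ S → T.Adj x y → x ∈ N ∧ y = v) (g : V → ℝ) :
    (∑ x, ∑ y, if (moveGraph T S N w hw fun s hs => (hN s hs).1).Adj x y then
      ((g x + if x ∈ S then g w - g v else 0) - (g y + if y ∈ S then g w - g v else 0)) ^ 2
      else 0) = ∑ x, ∑ y, if T.Adj x y then (g x - g y) ^ 2 else 0 := by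
  rw [Finset.sum_congr rfl fun x _ => sum_move_split hw (fun s hs => (hN s hs).1)
      (fun x y => ((g x + if x ∈ S then g w - g v else 0) -
        (g y + if y ∈ S then g w - g v else 0)) ^ 2) x,
    Finset.sum_congr rfl fun x _ => sum_adj_split hv hN hcut (fun x y => (g x - g y) ^ 2) x]
  simp only [Finset.sum_add_distrib]
  congr 1
  · congr 1
    · refine Finset.sum_congr rfl fun x _ => Finset.sum_congr rfl fun y _ => ?_
      split_ifs with h h1 h2 h2
      · ring
      · exact absurd (h.2.1 h1) h2
      · exact absurd (h.2.2 h2) h1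
      · ring
      · rfl
    · refine Finset.sum_congr rfl fun x _ => ?_
      rw [if_neg hw]
      split_ifs with h h1
      · ring
      · exact absurd (hN x h).1 h1
      · rfl
  · rw [Finset.sum_ite_eq' Finset.univ w, Finset.sum_ite_eq' Finset.univ v]
    simp only [Finset.mem_univ, if_true]
    refine Finset.sum_congr rfl fun s hs => ?_
    rw [if_neg hw, if_pos (hN s hs).1]
    ring
end move

/-- The exchange argument: a union `S` of `deg v - deg w` branches at `v`, on which the
eigenvector `g` is nonnegative, cannot be moved to a vertex `w` with `g v < g w`, since this would
preserve the energy of `g` and increase its variance, hence decrease the algebraic connectivity. -/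
lemma exchange (T : SimpleGraph V) (hT : T.IsTree)
    (hmin : ∀ T' : SimpleGraph V, T'.IsTree → degSeq T' = degSeq T → algConn T ≤ algConn T')
    (g : V → ℝ) (hg : T.lapMatrix ℝ *ᵥ g = algConn T • g) (hsum : ∑ x, g x = 0)
    {v w : V} {S : Set V} {N : Finset V} (hv : v ∉ S) (hw : w ∉ S)
    (hN : ∀ s ∈ N, s ∈ S ∧ T.Adj v s)
    (hcut : ∀ x y, x ∈ S → y ∉ S → T.Adj x y → x ∈ N ∧ y = v)
    (hdeg : N.card + T.degree w = T.degree v) (hN0 : 0 < N.card)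
    (hS : ∀ x ∈ S, 0 ≤ g x) (hlt : g v < g w) : False := by
  have hvw : v ≠ w := by rintro rfl; exact lt_irrefl _ hlt
  have hc : 1 < Fintype.card V := Fintype.one_lt_card_iff.2 ⟨v, w, hvw⟩
  have hα := algConn_pos T hc hT.connected
  set M := moveGraph T S N w hw fun s hs => (hN s hs).1 with hM
  have hle := hmin M (move_isTree hT hv hw hvw hN hcut hdeg)
    (move_degSeq hv hw hvw hN hcut hdeg)
  set c := g w - g v with hcdef
  have hcpos : 0 < c := by rw [hcdef]; linarith
  set n : ℝ := (Fintype.card V : ℝ) with hn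
  set k : ℝ := ∑ x, if x ∈ S then (1:ℝ) else 0 with hk
  have hkn : k < n := by
    rw [hk, hn, ← Finset.card_univ, Finset.card_eq_sum_ones, Nat.cast_sum]
    refine Finset.sum_lt_sum (fun x _ => by split_ifs <;> simp) ⟨v, Finset.mem_univ _, ?_⟩
    simp [hv]
  have hk0 : 0 < k := by
    obtain ⟨s, hs⟩ := Finset.card_pos.1 hN0
    refine Finset.sum_pos' (fun x _ => by split_ifs <;> simp) ⟨s, Finset.mem_univ _, ?_⟩
    simp [(hN s hs).1]
  set σ : ℝ := ∑ x, if x ∈ S then g x else 0 with hσ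
  have hσ0 : 0 ≤ σ := Finset.sum_nonneg fun x _ => by
    split_ifs with h
    · exact hS x h
    · exact le_rfl
  have hn0 : 0 < n := hk0.trans hkn
  set m := c * k / n with hm
  set g' : V → ℝ := fun x => (g x + if x ∈ S then c else 0) - m with hg'
  have hsum' : ∑ x, (g x + if x ∈ S then c else 0) = c * k := by
    rw [Finset.sum_add_distrib, hsum, hk, Finset.mul_sum]
    simp
  have hg's : ∑ x, g' x = 0 := by
    rw [hg', Finset.sum_sub_distrib, hsum', Finset.sum_const, Finset.card_univ, nsmul_eq_mul,
      ← hn, hm]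
    field_simp; ring
  have hE : g' ⬝ᵥ (M.lapMatrix ℝ *ᵥ g') = algConn T * (g ⬝ᵥ g) := by
    have : algConn T * (g ⬝ᵥ g) = g ⬝ᵥ (T.lapMatrix ℝ *ᵥ g) := by
      rw [hg, dotProduct_smul, smul_eq_mul]
    rw [this, dot_lap, dot_lap, ← energy_move hv hw hN hcut g]
    simp only [hg', sub_sub_sub_cancel_right]
    rfl
  have hnorm : g' ⬝ᵥ g' = g ⬝ᵥ g + 2 * c * σ + c ^ 2 * k * (1 - k / n) := by
    have : g' ⬝ᵥ g' = ∑ x, (g x * g x + 2 * c * (if x ∈ S then g x else 0)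
        + c ^ 2 * (if x ∈ S then 1 else 0) - 2 * m * (g x + if x ∈ S then c else 0) + m ^ 2) := by
      refine Finset.sum_congr rfl fun x _ => ?_
      simp only [hg']
      split_ifs <;> ring
    rw [this, Finset.sum_add_distrib, Finset.sum_sub_distrib, Finset.sum_add_distrib,
      Finset.sum_add_distrib, ← Finset.mul_sum, ← Finset.mul_sum, ← Finset.mul_sum, hsum',
      Finset.sum_const, Finset.card_univ, nsmul_eq_mul, ← hn, ← hk, ← hσ, hm]
    simp only [dotProduct]
    field_simp; ring
  have h1 := algConn_le_of_sum_zero M hc g' hg's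
  have hkn' : 0 < 1 - k / n := by rw [sub_pos, div_lt_one hn0]; exact hkn
  have hbig : g ⬝ᵥ g < g' ⬝ᵥ g' := by
    rw [hnorm]
    have : 0 < c ^ 2 * k * (1 - k / n) := by positivity
    have : 0 ≤ 2 * c * σ := by positivity
    linarith
  have hgg : 0 ≤ g ⬝ᵥ g := by simpa using dotProduct_star_self_nonneg g
  rw [hE] at h1
  have h2 : algConn T * (g' ⬝ᵥ g') ≤ algConn M * (g' ⬝ᵥ g') :=
    mul_le_mul_of_nonneg_right hle (hgg.trans hbig.le)
  have h3 := mul_lt_mul_of_pos_left hbig hα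
  linarith

/-- The exchange argument for the branches at `v` with roots in `N`. -/
lemma exchange_sides (T : SimpleGraph V) (hT : T.IsTree)
    (hmin : ∀ T' : SimpleGraph V, T'.IsTree → degSeq T' = degSeq T → algConn T ≤ algConn T')
    (g : V → ℝ) (hg : T.lapMatrix ℝ *ᵥ g = algConn T • g) (hsum : ∑ x, g x = 0)
    {v w : V} {N : Finset V} (hN : ∀ s ∈ N, T.Adj v s)
    (hw : ∀ s ∈ N, w ∉ side T s v)
    (hdeg : N.card + T.degree w = T.degree v) (hN0 : 0 < N.card)
    (hS : ∀ s ∈ N, ∀ x ∈ side T s v, 0 ≤ g x) (hlt : g v < g w) : False := by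
  refine exchange T hT hmin g hg hsum (v := v) (w := w) (S := {x | ∃ s ∈ N, x ∈ side T s v})
    (N := N) ?_ ?_ ?_ ?_ hdeg hN0 ?_ hlt
  · rintro ⟨s, hs, h⟩
    exact not_mem_side hT (hN s hs).symm h
  · rintro ⟨s, hs, h⟩
    exact hw s hs h
  · exact fun s hs => ⟨⟨s, hs, mem_side_self _ _ _⟩, hN s hs⟩
  · rintro x y ⟨s, hs, hx⟩ hy hxy
    have hy' : y ∉ side T s v := fun h => hy ⟨s, hs, h⟩
    obtain ⟨rfl, rfl⟩ := side_cut (not_mem_side hT (hN s hs).symm) hx hy' hxy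
    exact ⟨hs, rfl⟩
  · rintro x ⟨s, hs, hx⟩
    exact hS s hs x hx

/-! ### Sign structure of Fiedler vectors -/

/-- If `f` is an eigenvector, its positive part on `A` and its negative part on `B` span a space
on which the Rayleigh quotient is at most `α`, provided that all edges leaving `A` lead to
nonpositive values and all edges leaving `B` to nonnegative ones. The combination orthogonal to
constants is therefore again an eigenvector. -/
lemma exists_truncated_eigenvector (T : SimpleGraph V) (hc : 1 < Fintype.card V) (f : V → ℝ)
    (heig : T.lapMatrix ℝ *ᵥ f = algConn T • f) {A B : Set V} (hAB : ∀ x ∈ A, x ∉ B)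
    {a₀ b₀ : V} (ha₀ : a₀ ∈ A) (hfa : 0 < f a₀) (hb₀ : b₀ ∈ B) (hfb : f b₀ < 0)
    (hA : ∀ x ∈ A, ∀ y, y ∉ A → T.Adj x y → f y ≤ 0)
    (hB : ∀ x ∈ B, ∀ y, y ∉ B → T.Adj x y → 0 ≤ f y) :
    ∃ (s t : ℝ) (g : V → ℝ), 0 < s ∧ 0 < t ∧ (∀ x ∈ A, g x = s * max (f x) 0) ∧
      (∀ x ∈ B, g x = t * min (f x) 0) ∧ (∀ x, x ∉ A → x ∉ B → g x = 0) ∧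
      T.lapMatrix ℝ *ᵥ g = algConn T • g ∧ ∑ x, g x = 0 := by
  set α := algConn T
  set a : V → ℝ := fun x => if x ∈ A then max (f x) 0 else 0 with ha
  set b : V → ℝ := fun x => if x ∈ B then min (f x) 0 else 0 with hb
  have ha0 : ∀ x, 0 ≤ a x := fun x => by simp only [ha]; split_ifs <;> simp
  have hb0 : ∀ x, b x ≤ 0 := fun x => by simp only [hb]; split_ifs <;> simp
  have hab : ∀ x, a x * b x = 0 := fun x => by
    simp only [ha, hb]
    by_cases h : x ∈ A
    · simp [hAB x h]
    · simp [h]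
  set t := ∑ x, a x with ht
  set s := -∑ x, b x with hs
  have htpos : 0 < t := by
    refine Finset.sum_pos' (fun x _ => ha0 x) ⟨a₀, Finset.mem_univ _, ?_⟩
    simp [ha, ha₀, hfa]
  have hspos : 0 < s := by
    rw [hs, ← Finset.sum_neg_distrib]
    refine Finset.sum_pos' (fun x _ => by linarith [hb0 x]) ⟨b₀, Finset.mem_univ _, ?_⟩
    simp [hb, hb₀, hfb]
  have hf : ∀ x, (∑ y, if T.Adj x y then f x - f y else 0) = α * f x := fun x => by
    rw [← lap_apply, heig]; rfl
  set M := ∑ x, ∑ y, if T.Adj x y then a x * b y else 0 with hM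
  have hM0 : M ≤ 0 := Finset.sum_nonpos fun x _ => Finset.sum_nonpos fun y _ => by
    split_ifs
    · exact mul_nonpos_of_nonneg_of_nonpos (ha0 x) (hb0 y)
    · exact le_rfl
  have hMb : ∑ x, ∑ y, (if T.Adj x y then b x * a y else 0) = M := by
    rw [hM, Finset.sum_comm]
    refine Finset.sum_congr rfl fun x _ => Finset.sum_congr rfl fun y _ => ?_
    simp only [T.adj_comm y x, mul_comm (b y)]
  have qa : a ⬝ᵥ (T.lapMatrix ℝ *ᵥ a) - α * (a ⬝ᵥ a) ≤ M := by
    rw [hM, dotProduct, dotProduct, Finset.mul_sum, ← Finset.sum_sub_distrib]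
    refine Finset.sum_le_sum fun x _ => ?_
    rw [lap_apply]
    by_cases hx : x ∈ A ∧ 0 < f x
    · obtain ⟨hxA, hfx⟩ := hx
      have hax : a x = f x := by simp [ha, hxA, hfx.le]
      have e : a x * (∑ y, if T.Adj x y then a x - a y else 0) - α * (a x * a x) =
          ∑ y, if T.Adj x y then a x * (f y - a y) else 0 := by
        rw [hax, show α * (f x * f x) = f x * (α * f x) by ring, ← hf x, ← mul_sub,
          ← Finset.sum_sub_distrib, Finset.mul_sum]
        refine Finset.sum_congr rfl fun y _ => ?_
        split_ifs
        · ring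
        · simp
      rw [e]
      refine Finset.sum_le_sum fun y _ => ?_
      split_ifs with hxy
      · refine mul_le_mul_of_nonneg_left ?_ (ha0 x)
        by_cases hyA : y ∈ A
        · simp [ha, hb, hyA, hAB y hyA]
        · have := hA x hxA y hyA hxy
          by_cases hyB : y ∈ B <;> simp [ha, hb, hyA, hyB, this]
      · exact le_rfl
    · have hax : a x = 0 := by
        simp only [ha]
        split_ifs with h
        · exact max_eq_right (not_lt.1 fun h' => hx ⟨h, h'⟩)
        · rfl
      simp [hax]
  have qb : b ⬝ᵥ (T.lapMatrix ℝ *ᵥ b) - α * (b ⬝ᵥ b) ≤ M := by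
    rw [← hMb, dotProduct, dotProduct, Finset.mul_sum, ← Finset.sum_sub_distrib]
    refine Finset.sum_le_sum fun x _ => ?_
    rw [lap_apply]
    by_cases hx : x ∈ B ∧ f x < 0
    · obtain ⟨hxB, hfx⟩ := hx
      have hbx : b x = f x := by simp [hb, hxB, hfx.le]
      have e : b x * (∑ y, if T.Adj x y then b x - b y else 0) - α * (b x * b x) =
          ∑ y, if T.Adj x y then b x * (f y - b y) else 0 := by
        rw [hbx, show α * (f x * f x) = f x * (α * f x) by ring, ← hf x, ← mul_sub,
          ← Finset.sum_sub_distrib, Finset.mul_sum]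
        refine Finset.sum_congr rfl fun y _ => ?_
        split_ifs
        · ring
        · simp
      rw [e]
      refine Finset.sum_le_sum fun y _ => ?_
      split_ifs with hxy
      · refine mul_le_mul_of_nonpos_left ?_ (hb0 x)
        by_cases hyB : y ∈ B
        · have hyA : y ∉ A := fun h => hAB y h hyB
          simp [ha, hb, hyA, hyB]
        · have := hB x hxB y hyB hxy
          by_cases hyA : y ∈ A <;> simp [ha, hb, hyA, hyB, this]
      · exact le_rfl
    · have hbx : b x = 0 := by
        simp only [hb]
        split_ifs with h
        · exact min_eq_right (not_lt.1 fun h' => hx ⟨h, h'⟩)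
        · rfl
      simp [hbx]
  have dab : a ⬝ᵥ b = 0 := Finset.sum_eq_zero fun x _ => hab x
  have qab : a ⬝ᵥ (T.lapMatrix ℝ *ᵥ b) = -M := by
    rw [hM, dotProduct, ← Finset.sum_neg_distrib]
    refine Finset.sum_congr rfl fun x _ => ?_
    rw [lap_apply, Finset.mul_sum, ← Finset.sum_neg_distrib]
    refine Finset.sum_congr rfl fun y _ => ?_
    split_ifs
    · rw [mul_sub, hab]; ring
    · simp
  set g : V → ℝ := s • a + t • b with hg
  have hgsum : ∑ x, g x = 0 := by
    simp only [hg, Pi.add_apply, Pi.smul_apply, smul_eq_mul, Finset.sum_add_distrib,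
      ← Finset.mul_sum]
    rw [← ht, hs]; ring
  refine ⟨s, t, g, hspos, htpos, ?_, ?_, ?_, eigen_of_le T hc g hgsum ?_, hgsum⟩
  · intro x hx; simp [hg, ha, hb, hx, hAB x hx]
  · intro x hx
    have hxA : x ∉ A := fun h => hAB x h hx
    simp [hg, ha, hb, hx, hxA]
  · intro x h1 h2; simp [hg, ha, hb, h1, h2]
  · have e1 := lap_symm T b a
    have e2 := dotProduct_comm b a
    simp only [hg, mulVec_add, mulVec_smul, dotProduct_add, add_dotProduct, smul_dotProduct,
      dotProduct_smul, smul_eq_mul, e1, e2, dab, qab]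
    change _ ≤ α * _
    -- the difference of the two sides is at most `(s - t) ^ 2 * M`
    have h1 := mul_le_mul_of_nonneg_left qa (sq_nonneg s)
    have h2 := mul_le_mul_of_nonneg_left qb (sq_nonneg t)
    have h3 := mul_nonpos_of_nonneg_of_nonpos (sq_nonneg (s - t)) hM0
    linear_combination h1 + h2 + h3

/-- At a zero of an eigenvector, a nonzero value at some neighbour is balanced by a value of the
opposite sign at another one. -/
lemma exists_neg_of_pos (T : SimpleGraph V) (α : ℝ) (f : V → ℝ)
    (heig : T.lapMatrix ℝ *ᵥ f = α • f) {c p : V} (h : T.Adj c p) (hc : f c = 0)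
    (hp : 0 < f p) : ∃ m, T.Adj c m ∧ f m < 0 := by
  by_contra! hcon
  have h1 := congrFun heig c
  rw [lap_apply, Pi.smul_apply, hc, smul_zero] at h1
  have h2 : (∑ y, if T.Adj c y then (0:ℝ) - f y else 0) < 0 := by
    refine Finset.sum_neg' (fun y _ => ?_) ⟨p, Finset.mem_univ _, ?_⟩
    · split_ifs with hy
      · linarith [hcon y hy]
      · exact le_rfl
    · simp [h, hp]
  linarith

/-- If `f` is positive at `p` and nonpositive at the neighbour `c`, then it is positive on the
whole `p`-side of the edge `pc`. -/
lemma pos_on_side (T : SimpleGraph V) (hT : T.IsTree) (f : V → ℝ)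
    (heig : T.lapMatrix ℝ *ᵥ f = algConn T • f) {p c : V} (h : T.Adj p c) (hp : 0 < f p)
    (hfc : f c ≤ 0) : ∀ x ∈ side T p c, 0 < f x := by
  have hcard : 1 < Fintype.card V := Fintype.one_lt_card_iff.2 ⟨p, c, h.ne⟩
  have hcs := not_mem_side hT h
  obtain ⟨b₀, hb₀, hfb⟩ : ∃ b₀, b₀ ∉ side T p c ∧ f b₀ < 0 := by
    rcases hfc.lt_or_eq with h0 | h0
    · exact ⟨c, hcs, h0⟩
    · obtain ⟨m, hm, hfm⟩ := exists_neg_of_pos T _ f heig h.symm h0 hp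
      refine ⟨m, fun hms => ?_, hfm⟩
      obtain ⟨rfl, -⟩ := side_cut hcs hms hcs hm.symm
      linarith
  obtain ⟨s, t, g, hs, -, hgA, -, -, hg, -⟩ :=
    exists_truncated_eigenvector T hcard f heig (A := side T p c) (B := (side T p c)ᶜ)
      (fun x hx hx' => hx' hx) (mem_side_self T p c) hp hb₀ hfb
      (fun x hx y hy hxy => by rw [(side_cut hcs hx hy hxy).2]; exact hfc)
      (fun x hx y hy hxy => by
        rw [(side_cut hcs (not_not.1 hy) hx hxy.symm).1]; exact hp.le)
  refine side_induction (fun x => 0 < f x) hp ?_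
  intro x y hx hy hxy hfx
  by_contra! hfy
  have hgy : g y = 0 := by rw [hgA y hy, max_eq_right hfy, mul_zero]
  have hgx : 0 < g x := by rw [hgA x hx, max_eq_left hfx.le]; positivity
  obtain ⟨m, hm, hgm⟩ := exists_neg_of_pos T _ g hg hxy.symm hgy hgx
  by_cases hms : m ∈ side T p c
  · rw [hgA m hms] at hgm
    have : 0 ≤ s * max (f m) 0 := mul_nonneg hs.le (le_max_right _ _)
    linarith
  · obtain ⟨rfl, -⟩ := side_cut hcs hy hms hm
    linarith

/-- The Laplacian summed over a side gives the difference across the edge. -/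
lemma flow (T : SimpleGraph V) (hT : T.IsTree) (f : V → ℝ) {p c : V} (h : T.Adj p c) :
    (∑ x, if x ∈ side T p c then (T.lapMatrix ℝ *ᵥ f) x else 0) = f p - f c := by
  have hcs := not_mem_side hT h
  have hps := mem_side_self T p c
  have e1 : (∑ x, if x ∈ side T p c then (T.lapMatrix ℝ *ᵥ f) x else 0) =
      (∑ x, ∑ y, if x ∈ side T p c ∧ y ∈ side T p c ∧ T.Adj x y then f x - f y else 0) +
      ∑ x, ∑ y, if x = p ∧ y = c then f x - f y else 0 := by
    rw [← Finset.sum_add_distrib]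
    refine Finset.sum_congr rfl fun x _ => ?_
    rw [lap_apply, ← Finset.sum_add_distrib]
    by_cases hx : x ∈ side T p c
    · rw [if_pos hx]
      refine Finset.sum_congr rfl fun y _ => ?_
      by_cases hy : y ∈ side T p c
      · have : ¬ (x = p ∧ y = c) := fun h' => hcs (h'.2 ▸ hy)
        simp [hx, hy, this]
      · by_cases hxy : T.Adj x y
        · obtain ⟨rfl, rfl⟩ := side_cut hcs hx hy hxy
          simp [hy, hxy]
        · have : ¬ (x = p ∧ y = c) := fun h' => hxy (h'.1 ▸ h'.2 ▸ h)
          simp [hy, hxy, this]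
    · have : x ≠ p := fun h' => hx (h' ▸ hps)
      simp [hx, this]
  have e2 : (∑ x, ∑ y, if x ∈ side T p c ∧ y ∈ side T p c ∧ T.Adj x y then f x - f y else 0)
      = 0 := by
    have : (∑ x, ∑ y, if x ∈ side T p c ∧ y ∈ side T p c ∧ T.Adj x y then f x - f y else 0)
      = -(∑ x, ∑ y, if x ∈ side T p c ∧ y ∈ side T p c ∧ T.Adj x y then f x - f y else 0) := by
      conv_lhs => rw [Finset.sum_comm]
      rw [← Finset.sum_neg_distrib]
      refine Finset.sum_congr rfl fun x _ => ?_
      rw [← Finset.sum_neg_distrib]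
      refine Finset.sum_congr rfl fun y _ => ?_
      by_cases h1 : x ∈ side T p c <;> by_cases h2 : y ∈ side T p c <;>
        by_cases h3 : T.Adj x y <;> simp [h1, h2, h3, T.adj_comm y x]
    linarith
  rw [e1, e2, zero_add, Finset.sum_eq_single p, Finset.sum_eq_single c]
  · simp
  · intro y _ hy; simp [hy]
  · simp
  · intro x _ hx; simp [hx]
  · simp

lemma lt_of_pos_side (T : SimpleGraph V) (hT : T.IsTree) (f : V → ℝ) {α : ℝ} (hα : 0 < α)
    (heig : T.lapMatrix ℝ *ᵥ f = α • f) {p c : V} (h : T.Adj p c)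
    (hpos : ∀ x ∈ side T p c, 0 < f x) : f c < f p := by
  have hfl := flow T hT f h
  rw [heig] at hfl
  have : 0 < ∑ x, if x ∈ side T p c then (α • f) x else 0 := by
    refine Finset.sum_pos' (fun x _ => ?_) ⟨p, Finset.mem_univ _, ?_⟩
    · split_ifs with hx
      · exact mul_nonneg hα.le (hpos x hx).le
      · exact le_rfl
    · rw [if_pos (mem_side_self T p c)]
      exact mul_pos hα (hpos p (mem_side_self T p c))
  linarith

lemma sum_eq_zero_of_eigen (T : SimpleGraph V) (f : V → ℝ) {α : ℝ} (hα : α ≠ 0)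
    (heig : T.lapMatrix ℝ *ᵥ f = α • f) : ∑ x, f x = 0 := by
  have h := sum_lap T f
  rw [heig] at h
  simp only [Pi.smul_apply, smul_eq_mul, ← Finset.mul_sum] at h
  exact (mul_eq_zero.1 h).resolve_left hα

/-! ### Degrees along the path -/

/-- There are enough neighbours of `v` besides `w` and `t` to move. -/
lemma exists_moved (T : SimpleGraph V) {v w t : V} (hw : 2 ≤ T.degree w)
    (hlt : T.degree w < T.degree v) :
    ∃ N : Finset V, (∀ s ∈ N, T.Adj v s ∧ s ≠ w ∧ s ≠ t) ∧
      N.card + T.degree w = T.degree v ∧ 0 < N.card := by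
  have h1 : T.degree v - T.degree w ≤ (((T.neighborFinset v).erase w).erase t).card := by
    have a := Finset.pred_card_le_card_erase (s := T.neighborFinset v) (a := w)
    have b := Finset.pred_card_le_card_erase (s := (T.neighborFinset v).erase w) (a := t)
    rw [SimpleGraph.card_neighborFinset_eq_degree] at a
    omega
  obtain ⟨N, hN, hcard⟩ := Finset.exists_subset_card_eq h1
  refine ⟨N, fun s hs => ?_, by omega, by omega⟩
  have := hN hs
  simp only [Finset.mem_erase, SimpleGraph.mem_neighborFinset] at this
  tauto

/-- Inside a positive side, degrees cannot drop along an edge directed away from `c`. -/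
lemma no_drop_pos (T : SimpleGraph V) (hT : T.IsTree)
    (hmin : ∀ T' : SimpleGraph V, T'.IsTree → degSeq T' = degSeq T → algConn T ≤ algConn T')
    (f : V → ℝ) (heig : T.lapMatrix ℝ *ᵥ f = algConn T • f) {p c v w : V} (h : T.Adj p c)
    (hpos : ∀ x ∈ side T p c, 0 < f x) (hvw : T.Adj v w) (hv : v ∈ side T p c)
    (hw : w ∈ side T p c) (hcv : c ∈ side T v w) (hdw : 2 ≤ T.degree w)
    (hlt : T.degree w < T.degree v) : False := by
  have hα := algConn_pos T (Fintype.one_lt_card_iff.2 ⟨p, c, h.ne⟩) hT.connected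
  have hcs := not_mem_side hT h
  have hcw : c ∉ side T w v := by
    rw [side_compl hT hvw.symm]; exact hcv
  have hcv' : c ≠ v := by rintro rfl; exact hcs hv
  obtain ⟨t, hvt, hct⟩ := exists_branch hT hcv'
  have hsub : ∀ s, T.Adj v s → s ≠ t → side T s v ⊆ side T p c := by
    intro s hs hst
    have hcs' : c ∉ side T s v := fun hc => side_disjoint hT hs hvt hst hc hct
    refine side_subset hT hs.symm h ?_ (Or.inr hcs')
    by_contra hsn
    obtain ⟨-, rfl⟩ := side_cut hcs hv hsn hs
    exact hcs' (mem_side_self _ _ _)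
  have hwt : w ≠ t := by rintro rfl; exact hcw hct
  obtain ⟨N, hN, hdeg, hN0⟩ := exists_moved T (t := t) hdw hlt
  refine exchange_sides T hT hmin f heig (sum_eq_zero_of_eigen T f hα.ne' heig) (v := v) (w := w)
    (fun s hs => (hN s hs).1) ?_ hdeg hN0 ?_ ?_
  · intro s hs hws
    exact side_disjoint hT (hN s hs).1 hvw (hN s hs).2.1 hws (mem_side_self _ _ _)
  · intro s hs x hx
    exact (hpos x (hsub s (hN s hs).1 (hN s hs).2.2 hx)).le
  · exact lt_of_pos_side T hT f hα heig hvw.symm fun x hx => hpos x (hsub w hvw hwt hx)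

/-- The degree cannot drop along an edge from a zero of `f` to a positive vertex. -/
lemma no_drop_zero_pos (T : SimpleGraph V) (hT : T.IsTree)
    (hmin : ∀ T' : SimpleGraph V, T'.IsTree → degSeq T' = degSeq T → algConn T ≤ algConn T')
    (f : V → ℝ) (heig : T.lapMatrix ℝ *ᵥ f = algConn T • f) {v w : V} (hvw : T.Adj v w)
    (hv : f v = 0) (hw : 0 < f w) (hdw : 2 ≤ T.degree w)
    (hlt : T.degree w < T.degree v) : False := by
  have hcard : 1 < Fintype.card V := Fintype.one_lt_card_iff.2 ⟨v, w, hvw.ne⟩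
  obtain ⟨m, hvm, hm⟩ := exists_neg_of_pos T _ f heig hvw hv hw
  have hwm : w ≠ m := by rintro rfl; linarith
  have hvA := not_mem_side hT hvw.symm
  have hvB := not_mem_side hT hvm.symm
  -- use a Fiedler vector supported on two branches only, one of which stays at `v`
  obtain ⟨s, t, g, hs, -, hgA, -, hg0, hg, hgs⟩ :=
    exists_truncated_eigenvector T hcard f heig (A := side T w v) (B := side T m v)
      (fun x hx => side_disjoint hT hvw hvm hwm hx) (mem_side_self _ _ _) hw
      (mem_side_self _ _ _) hm
      (fun x hx y hy hxy => by rw [(side_cut hvA hx hy hxy).2, hv])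
      (fun x hx y hy hxy => by rw [(side_cut hvB hx hy hxy).2, hv])
  obtain ⟨N, hN, hdeg, hN0⟩ := exists_moved T (t := m) hdw hlt
  refine exchange_sides T hT hmin g hg hgs (v := v) (w := w)
    (fun s hs => (hN s hs).1) ?_ hdeg hN0 ?_ ?_
  · intro s hs hws
    exact side_disjoint hT (hN s hs).1 hvw (hN s hs).2.1 hws (mem_side_self _ _ _)
  · intro s hs x hx
    rw [hg0 x (side_disjoint hT (hN s hs).1 hvw (hN s hs).2.1 hx)
      (side_disjoint hT (hN s hs).1 hvm (hN s hs).2.2 hx)]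
  · rw [hg0 v hvA hvB, hgA w (mem_side_self _ _ _), max_eq_left hw.le]
    positivity

/-- A Fiedler vector of a minimal tree has no zero of degree at least two besides the
characteristic vertex `c`: the branches at such a zero pointing away from `c` could be moved to a
leaf with positive value. -/
lemma no_second_zero (T : SimpleGraph V) (hT : T.IsTree)
    (hmin : ∀ T' : SimpleGraph V, T'.IsTree → degSeq T' = degSeq T → algConn T ≤ algConn T')
    (f : V → ℝ) (heig : T.lapMatrix ℝ *ᵥ f = algConn T • f) {c p y : V} (hcp : T.Adj c p)
    (hc : f c = 0) (hp : 0 < f p) (hy : f y = 0) (hyc : y ≠ c) (hdy : 2 ≤ T.degree y) :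
    False := by
  have hcard : 1 < Fintype.card V := Fintype.one_lt_card_iff.2 ⟨c, p, hcp.ne⟩
  obtain ⟨m, hcm, hm⟩ := exists_neg_of_pos T _ f heig hcp hc hp
  have hpm : p ≠ m := by rintro rfl; linarith
  have hcA := not_mem_side hT hcp.symm
  have hcB := not_mem_side hT hcm.symm
  obtain ⟨s, t, g, hs, -, hgA, -, hg0, hg, hgs⟩ :=
    exists_truncated_eigenvector T hcard f heig (A := side T p c) (B := side T m c)
      (fun x hx => side_disjoint hT hcp hcm hpm hx) (mem_side_self _ _ _) hp
      (mem_side_self _ _ _) hm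
      (fun x hx y hy hxy => by rw [(side_cut hcA hx hy hxy).2, hc])
      (fun x hx y hy hxy => by rw [(side_cut hcB hx hy hxy).2, hc])
  have hposA := pos_on_side T hT f heig hcp.symm hp hc.le
  have hnegB := pos_on_side T hT (-f) (by rw [mulVec_neg, heig, smul_neg]) hcm.symm
    (by simpa using hm) (by simp [hc])
  have hyA : y ∉ side T p c := fun h => by linarith [hposA y h]
  have hyB : y ∉ side T m c := fun h => by
    have := hnegB y h
    simp [hy] at this
  obtain ⟨t', hyt, hct⟩ := exists_branch hT hyc.symm
  have hsub : ∀ q, T.Adj c q → f q ≠ 0 → y ∉ side T q c → side T q c ⊆ side T t' y := by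
    intro q hq hfq hyq
    refine side_subset hT hq.symm hyt.symm ?_ (Or.inr hyq)
    by_contra hqn
    obtain ⟨-, rfl⟩ := side_cut (not_mem_side hT hyt.symm) hct hqn hq
    exact hfq hy
  obtain ⟨x, hxA, hdx⟩ := exists_leaf hT hcp.symm
  have hN : ∀ s ∈ (T.neighborFinset y).erase t', T.Adj y s ∧ s ≠ t' := by
    intro s hs
    simp only [Finset.mem_erase, SimpleGraph.mem_neighborFinset] at hs
    exact ⟨hs.2, hs.1⟩
  have hcardN : ((T.neighborFinset y).erase t').card = T.degree y - 1 := by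
    rw [Finset.card_erase_of_mem (by simpa using hyt),
      SimpleGraph.card_neighborFinset_eq_degree]
  refine exchange_sides T hT hmin g hg hgs (v := y) (w := x)
    (fun s hs => (hN s hs).1) ?_ (by rw [hcardN, hdx]; omega) (by rw [hcardN]; omega) ?_ ?_
  · intro s hs hxs
    exact side_disjoint hT (hN s hs).1 hyt (hN s hs).2 hxs (hsub p hcp hp.ne' hyA hxA)
  · intro s hs x hx
    have hxt := side_disjoint hT (hN s hs).1 hyt (hN s hs).2 hx
    rw [hg0 x (fun h => hxt (hsub p hcp hp.ne' hyA h))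
      (fun h => hxt (hsub m hcm hm.ne hyB h))]
  · rw [hg0 y hyA hyB, hgA x hxA, max_eq_left (hposA x hxA).le]
    exact mul_pos hs (hposA x hxA)

/-- The local form of the theorem: no degree drop along a single edge of the path. -/
lemma no_drop (T : SimpleGraph V) (hT : T.IsTree)
    (hmin : ∀ T' : SimpleGraph V, T'.IsTree → degSeq T' = degSeq T → algConn T ≤ algConn T')
    (f : V → ℝ) (hf : f ≠ 0) (heig : T.lapMatrix ℝ *ᵥ f = algConn T • f) {z v w : V}
    (hz : f z = 0 ∨ (0 < f z ∧ ∃ u, T.Adj z u ∧ f u < 0)) (hvw : T.Adj v w)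
    (hd : T.dist z v < T.dist z w) (hv : 0 ≤ f v) (hw : 0 ≤ f w) (hdv : 2 ≤ T.degree v)
    (hdw : 2 ≤ T.degree w) : T.degree v ≤ T.degree w := by
  by_contra! hlt
  have heig' : T.lapMatrix ℝ *ᵥ (-f) = algConn T • (-f) := by rw [mulVec_neg, heig, smul_neg]
  have hzv : z ∈ side T v w := mem_side_of_dist_lt hT hvw hd
  rcases hz with hz | ⟨hz, u, hzu, hu⟩
  · -- a characteristic vertex
    rcases hw.lt_or_eq with hw | hw
    · rcases hv.lt_or_eq with hv | hv
      · -- leave the positive region containing `v` along an edge `pc`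
        obtain ⟨p, c, hpc, hp, hc, hvp, hwp⟩ : ∃ p c, T.Adj p c ∧ 0 < f p ∧ f c ≤ 0 ∧
            v ∈ side T p c ∧ w ∈ side T p c := by
          by_contra! hcon
          have hR : ∀ x, 0 < f x ∧
              Relation.ReflTransGen (fun a b => T.Adj a b ∧ 0 < f a ∧ 0 < f b) x v := by
            refine conn_induction hT.connected _ ⟨hv, Relation.ReflTransGen.refl⟩ ?_
            rintro x y hxy ⟨hx, hxv⟩
            have hback : ∀ c, T.Adj x c → f c ≤ 0 → ∀ b,
                Relation.ReflTransGen (fun a b => T.Adj a b ∧ 0 < f a ∧ 0 < f b) x b →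
                b ∈ side T x c := by
              intro c hxc hc b hb
              induction hb with
              | refl => exact mem_side_self _ _ _
              | tail _ hab ih =>
                by_contra hn
                have := (side_cut (not_mem_side hT hxc) ih hn hab.1).2
                rw [this] at hab
                linarith [hab.2.2]
            have hy : 0 < f y := by
              by_contra! hy
              exact hcon x y hxy hx hy (hback y hxy hy v hxv)
                (hback y hxy hy w (hxv.tail ⟨hvw, hv, hw⟩))
            exact ⟨hy, hxv.head ⟨hxy.symm, hy, hx⟩⟩
          linarith [(hR z).1]
        have hpos := pos_on_side T hT f heig hpc hp hc
        refine no_drop_pos T hT hmin f heig hpc hpos hvw hvp hwp ?_ hdw hlt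
        by_contra hcn
        rw [side_compl hT hvw] at hcn
        have hzp : z ∉ side T p c := fun h => by linarith [hpos z h]
        rw [side_compl hT hpc] at hzp
        have hwc : w ∉ side T c p := by
          rw [side_compl hT hpc.symm]; exact hwp
        exact (side_compl hT hvw z).2 (side_subset hT hpc.symm hvw.symm hcn (Or.inl hwc) hzp) hzv
      · exact no_drop_zero_pos T hT hmin f heig hvw hv.symm hw hdw hlt
    · rcases hv.lt_or_eq with hv | hv
      · have := pos_on_side T hT f heig hvw hv hw.symm.le z hzv
        linarith
      · -- both endpoints are zeros, so one of them is not the characteristic vertex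
        obtain ⟨c, p, hcp, hc, hp⟩ : ∃ c p, T.Adj c p ∧ f c = 0 ∧ f p ≠ 0 := by
          by_contra! hcon
          exact hf (funext (conn_induction hT.connected (fun x => f x = 0) hz
            fun x y hxy hx => hcon x y hxy hx))
        obtain ⟨p, hcp, hp⟩ : ∃ p, T.Adj c p ∧ 0 < f p := by
          rcases hp.lt_or_gt with hp | hp
          · obtain ⟨m, hm, hfm⟩ := exists_neg_of_pos T _ (-f) heig' hcp (by simp [hc])
              (by simpa using hp)
            exact ⟨m, hm, by simpa using hfm⟩
          · exact ⟨p, hcp, hp⟩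
        by_cases hvc : v = c
        · have hwc : w ≠ c := by rintro rfl; exact hvw.ne hvc
          exact no_second_zero T hT hmin f heig hcp hc hp hw.symm hwc hdw
        · exact no_second_zero T hT hmin f heig hcp hc hp hv.symm hvc hdv
  · -- a characteristic edge
    have hpos := pos_on_side T hT f heig hzu hz hu.le
    have hneg := pos_on_side T hT (-f) heig' hzu.symm (by simpa using hu) (by simpa using hz.le)
    have hside : ∀ x, 0 ≤ f x → x ∈ side T z u := by
      intro x hx
      by_contra hn
      have := hneg x ((side_compl hT hzu x).1 hn)
      simp only [Pi.neg_apply] at this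
      linarith
    refine no_drop_pos T hT hmin f heig hzu hpos hvw (hside v hv) (hside w hw) ?_ hdw hlt
    by_contra hn
    obtain ⟨rfl, rfl⟩ := side_cut (not_mem_side hT hvw) hzv hn hzu
    linarith

/-- The nonnegative half of the theorem. -/
lemma monotone_half (T : SimpleGraph V) (hT : T.IsTree)
    (hmin : ∀ T' : SimpleGraph V, T'.IsTree → degSeq T' = degSeq T → algConn T ≤ algConn T')
    (f : V → ℝ) (hf : f ≠ 0) (heig : T.lapMatrix ℝ *ᵥ f = algConn T • f) (z : V)
    (hz : f z = 0 ∨ (0 < f z ∧ ∃ u, T.Adj z u ∧ f u < 0)) (P : List V)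
    (hP : ∀ v, v ∈ P ↔ 1 < T.degree v ∧ 0 ≤ f v) (hadj : P.IsChain T.Adj)
    (hdist : (P.map (T.dist z)).IsChain (· < ·)) :
    (P.map (fun v => T.degree v)).IsChain (· ≤ ·) := by
  rw [List.isChain_map] at hdist ⊢
  rw [List.isChain_iff_getElem] at hadj hdist ⊢
  intro i hi
  have h1 := (hP _).1 (List.getElem_mem (l := P) (n := i) (by omega))
  have h2 := (hP _).1 (List.getElem_mem (l := P) (n := i + 1) hi)
  exact no_drop T hT hmin f hf heig hz (hadj i hi) (hdist i hi) h1.2 h2.2 h1.1 h2.1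

end graph

/-- for a tree of minimal algebraic connectivity among trees
with its degree sequence, the degrees of the non-pendant vertices of each
nodal domain of a Fiedler vector are non-decreasing along the induced path,
ordered away from the characteristic vertex/edge (vertex `z`). -/
theorem degrees_monotone_from_characteristic_set {V : Type*} [Fintype V] [DecidableEq V]
    (T : SimpleGraph V) (hT : T.IsTree)
    (hmin : ∀ T' : SimpleGraph V, T'.IsTree → degSeq T' = degSeq T →
      algConn T ≤ algConn T')
    (f : V → ℝ) (hf : f ≠ 0)
    (heig : (T.lapMatrix ℝ) *ᵥ f = algConn T • f) :
    (∀ (z : V), (f z = 0 ∨ (0 < f z ∧ ∃ u, T.Adj z u ∧ f u < 0)) →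
      ∀ P : List V, (∀ v, v ∈ P ↔ 1 < T.degree v ∧ 0 ≤ f v) →
        P.Chain' T.Adj → (P.map (T.dist z)).Chain' (· < ·) →
        (P.map (fun v => T.degree v)).Chain' (· ≤ ·)) ∧
    (∀ (z : V), (f z = 0 ∨ (f z < 0 ∧ ∃ u, T.Adj z u ∧ 0 < f u)) →
      ∀ P : List V, (∀ v, v ∈ P ↔ 1 < T.degree v ∧ f v ≤ 0) →
        P.Chain' T.Adj → (P.map (T.dist z)).Chain' (· < ·) →
        (P.map (fun v => T.degree v)).Chain' (· ≤ ·)) := by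
  refine ⟨fun z hz P hP hadj hdist => monotone_half T hT hmin f hf heig z hz P hP hadj hdist,
    fun z hz P hP hadj hdist => ?_⟩
  exact monotone_half T hT hmin (-f) (neg_ne_zero.2 hf) (by rw [mulVec_neg, heig, smul_neg]) z
    (by simpa using hz) P (by simpa using hP) hadj hdist
end

section
/- Let T₀ be a rooted tree with single boundary vertex v₀ such that T₀ \ {v₀} has several connected components (branches). If f is a first Dirichlet eigenvector of T₀ that is strictly positive on exactly one branch and zero on the others, and if T₀ has minimal first Dirichlet eigenvalue among rooted trees with its degree sequence, then every branch on which f vanishes is a single pendant vertex. -/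
/-!
Let `c` be the root of a branch on which `f` vanishes, and suppose that `c` has a neighbour
`c' ≠ v₀`. With `b` the root of the positive branch, replace the edges `v₀b`, `cc'` by `v₀c'`, `cb`
(`edgeSwitch`). The result is again a tree (`edgeSwitch_isTree`) with the same degrees
(`edgeSwitch_degSeq`). If `v₀b` was the edge of weight `w₀`, that weight is put on `v₀c'`.

Since `f` vanishes at `v₀, c, c'`, the switch only replaces the energy `w(v₀b) f(b)² ≥ f(b)²` by
`1 · f(b)²` (`edgeSwitch_energy_le`), so the Rayleigh quotient of `f` on the new tree is at most
`ν(T)`, which by minimality is at most the first eigenvalue of the new tree. Hence `f` is an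
eigenvector of the new tree as well (`mulVec_eq_of_rayleigh_le`). But `f ≥ 0` vanishes at `c` while
its new neighbour `b` carries `f(b) > 0`, so the eigenvalue equation fails at `c`.

If a zero of `f` is not a pendant neighbour of `v₀`, such a pair `c, c'` exists
(`exists_child_of_not_adj` when it is not adjacent to `v₀`).
-/

open Matrix BigOperators
open scoped Classical

/-- Edge weights of a rooted tree: every edge has weight 1 except the
boundary edge from the root `v₀` to the distinguished neighbor `x`,
which has weight `w₀`. -/
noncomputable def treeWeight {V : Type*} [Fintype V] [DecidableEq V]
    (T : SimpleGraph V) (v₀ x : V) (w₀ : ℝ) : V → V → ℝ :=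
  fun u v => if T.Adj u v then
    (if (u = v₀ ∧ v = x) ∨ (u = x ∧ v = v₀) then w₀ else 1) else 0

/-- First Dirichlet eigenvalue of a rooted tree (root = unique boundary vertex). -/
noncomputable def nuRooted {V : Type*} [Fintype V] [DecidableEq V]
    (T : SimpleGraph V) (v₀ x : V) (w₀ : ℝ) : ℝ :=
  minEig (dirichletMatrix (treeWeight T v₀ x w₀) ({v₀}ᶜ : Set V))

/-- A caterpillar: the non-pendant vertices can be arranged as a path. -/
noncomputable def IsCaterpillar {V : Type*} [Fintype V] [DecidableEq V]
    (T : SimpleGraph V) : Prop :=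
  ∃ P : List V, P.Nodup ∧ (∀ v, v ∈ P ↔ 1 < T.degree v) ∧ P.Chain' T.Adj

open SimpleGraph

/-! ### Extremality of `minEig` -/

theorem minEig_le_eigenvalues {W : Type*} [Fintype W] [DecidableEq W] {A : Matrix W W ℝ}
    (hA : A.IsHermitian) (i : W) : minEig A ≤ hA.eigenvalues i := by
  have hc : 0 < Fintype.card W := Fintype.card_pos_iff.2 ⟨i⟩
  set g : Fin (Fintype.card W) → ℝ := hA.eigenvalues ∘ (Fintype.equivFin W).symm with hg
  have h1 : minEig A = (g ∘ Tuple.sort g) ⟨0, hc⟩ := by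
    simp only [minEig, kthEig, dif_pos hA, dif_pos hc, hg]
  have h2 : hA.eigenvalues i =
      (g ∘ Tuple.sort g) ((Tuple.sort g).symm (Fintype.equivFin W i)) := by
    simp [hg]
  rw [h1, h2]
  exact Tuple.monotone_sort g (Fin.mk_le_of_le_val (Nat.zero_le _))

theorem posSemidef_sub_smul_one {W : Type*} [Fintype W] [DecidableEq W] {A : Matrix W W ℝ}
    (hA : A.IsHermitian) {μ : ℝ} (hμ : μ ≤ minEig A) : (A - μ • (1 : Matrix W W ℝ)).PosSemidef := by
  rw [Matrix.posSemidef_iff_isHermitian_and_spectrum_nonneg]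
  refine ⟨hA.sub (by simp [Matrix.IsHermitian]), ?_⟩
  rw [← Algebra.algebraMap_eq_smul_one, ← spectrum.sub_singleton_eq,
    hA.spectrum_real_eq_range_eigenvalues]
  rintro _ ⟨_, ⟨i, rfl⟩, _, rfl, rfl⟩
  exact sub_nonneg.2 (hμ.trans (minEig_le_eigenvalues hA i))

/-- If the Rayleigh quotient of `f` is at most a lower bound `μ` of the spectrum, then `f` is an
eigenvector for `μ`: it is isotropic for the positive semidefinite form `A - μ`, hence in its
kernel. -/
theorem mulVec_eq_of_rayleigh_le {W : Type*} [Fintype W] [DecidableEq W] {A : Matrix W W ℝ}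
    (hA : A.IsHermitian) {μ : ℝ} (hμ : μ ≤ minEig A) {f : W → ℝ}
    (hf : f ⬝ᵥ (A *ᵥ f) ≤ μ * (f ⬝ᵥ f)) : A *ᵥ f = μ • f := by
  have hP := posSemidef_sub_smul_one hA hμ
  have hmv : (A - μ • (1 : Matrix W W ℝ)) *ᵥ f = A *ᵥ f - μ • f := by
    rw [Matrix.sub_mulVec, Matrix.smul_mulVec, Matrix.one_mulVec]
  have h0 : star f ⬝ᵥ ((A - μ • (1 : Matrix W W ℝ)) *ᵥ f) = 0 := by
    refine le_antisymm ?_ (hP.dotProduct_mulVec_nonneg f)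
    rw [hmv, star_trivial, dotProduct_sub, dotProduct_smul, smul_eq_mul]
    linarith
  have h1 := (hP.dotProduct_mulVec_zero_iff f).1 h0
  rw [hmv] at h1
  exact sub_eq_zero.1 h1

/-! ### Dirichlet energy -/

section Dirichlet

variable {V : Type*} [Fintype V] [DecidableEq V]

theorem sum_subtype_of_zero {V : Type*} [Fintype V] (S : Set V) [Fintype S] (h : V → ℝ) (hh : ∀ v, v ∉ S → h v = 0) :
    ∑ a : S, h a = ∑ v, h v := by
  rw [Finset.sum_set_coe]
  refine Finset.sum_subset (Finset.subset_univ _) fun v _ hv => hh v (by simpa using hv)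

theorem dirichletMatrix_mulVec (w : V → V → ℝ) (S : Set V) [Fintype S] (F : V → ℝ)
    (hF : ∀ v, v ∉ S → F v = 0) (a : S) :
    (dirichletMatrix w S *ᵥ fun v : S => F v) a =
      (∑ u, w a u) * F a - ∑ u, w a u * F u := by
  have h1 : (dirichletMatrix w S *ᵥ fun v : S => F v) a = ∑ v : S, wLap w a v * F v := rfl
  rw [h1, sum_subtype_of_zero S (fun v => wLap w a v * F v) (fun v hv => by simp [hF v hv])]
  simp [wLap, Matrix.diagonal_apply, sub_mul, Finset.sum_sub_distrib]

theorem dirichletMatrix_isHermitian (w : V → V → ℝ) (hw : ∀ u v, w u v = w v u) (S : Set V) :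
    (dirichletMatrix w S).IsHermitian := by
  ext a c
  by_cases h : a = c
  · subst h; simp
  · have : (a : V) ≠ c := fun h' => h (Subtype.ext h')
    simp [dirichletMatrix, wLap, this, this.symm, hw a c]

/-- The Dirichlet energy: for a function vanishing off the interior, the quadratic form of the
Dirichlet matrix is a sum of squared differences over edges (each edge counted twice). -/
theorem two_mul_dirichlet_form (w : V → V → ℝ) (hw : ∀ u v, w u v = w v u) (S : Set V) [Fintype S]
    (F : V → ℝ) (hF : ∀ v, v ∉ S → F v = 0) :
    2 * ((fun v : S => F v) ⬝ᵥ (dirichletMatrix w S *ᵥ fun v : S => F v)) =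
      ∑ u, ∑ v, w u v * (F u - F v) ^ 2 := by
  have h1 : (fun v : S => F v) ⬝ᵥ (dirichletMatrix w S *ᵥ fun v : S => F v) =
      ∑ v, F v * ((∑ u, w v u) * F v - ∑ u, w v u * F u) := by
    rw [← sum_subtype_of_zero S _ (fun v hv => by simp [hF v hv])]
    exact Finset.sum_congr rfl fun a _ => by rw [dirichletMatrix_mulVec w S F hF a]
  have h2 : ∑ v, F v * ((∑ u, w v u) * F v - ∑ u, w v u * F u) =
      ∑ u, ∑ v, w u v * (F u ^ 2 - F u * F v) := by
    refine Finset.sum_congr rfl fun v _ => ?_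
    rw [Finset.sum_mul, ← Finset.sum_sub_distrib, Finset.mul_sum]
    exact Finset.sum_congr rfl fun u _ => by ring
  have h3 : ∑ u, ∑ v, w u v * (F u ^ 2 - F u * F v) =
      ∑ u, ∑ v, w u v * (F v ^ 2 - F u * F v) := by
    rw [Finset.sum_comm]
    exact Finset.sum_congr rfl fun u _ => Finset.sum_congr rfl fun v _ => by rw [hw v u]; ring
  rw [h1, h2, two_mul]
  nth_rewrite 2 [h3]
  rw [← Finset.sum_add_distrib]
  refine Finset.sum_congr rfl fun u _ => ?_
  rw [← Finset.sum_add_distrib]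
  exact Finset.sum_congr rfl fun v _ => by ring

theorem treeWeight_comm (T : SimpleGraph V) (v₀ x : V) (w₀ : ℝ) (u v : V) :
    treeWeight T v₀ x w₀ u v = treeWeight T v₀ x w₀ v u := by
  simp only [treeWeight, T.adj_comm u v]
  congr 2
  apply propext
  tauto

end Dirichlet

/-! ### Edge switching in trees -/

section Switch

variable {V : Type*}

/-- The graph obtained from `T` by deleting the edges `pq`, `rs` and inserting `ps`, `rq`. -/
def edgeSwitch (T : SimpleGraph V) (p q r s : V) (hps : p ≠ s) (hrq : r ≠ q) : SimpleGraph V where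
  Adj u v := (T.Adj u v ∧ s(u, v) ≠ s(p, q) ∧ s(u, v) ≠ s(r, s)) ∨
    s(u, v) = s(p, s) ∨ s(u, v) = s(r, q)
  symm := ⟨fun u v h => by rwa [Sym2.eq_swap, T.adj_comm]⟩
  loopless := ⟨fun u h => by
    rcases h with h | h | h
    · exact T.irrefl h.1
    · simp only [Sym2.eq_iff] at h; grind
    · simp only [Sym2.eq_iff] at h; grind⟩

variable {T : SimpleGraph V} {p q r s : V} {hps : p ≠ s} {hrq : r ≠ q}

/-- Switching along a path `q p r s` keeps the graph connected: `pr` survives, so the ends of the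
deleted edges `pq`, `rs` stay joined through `p r q` and `r p s`. -/
theorem edgeSwitch_connected (hT : T.Connected) (hpr : T.Adj p r) :
    (edgeSwitch T p q r s hps hrq).Connected := by
  have := hT.nonempty
  have hp_r : (edgeSwitch T p q r s hps hrq).Reachable p r := by
    refine Adj.reachable (Or.inl ⟨hpr, ?_, ?_⟩)
    · simp only [ne_eq, Sym2.eq_iff]; grind
    · simp only [ne_eq, Sym2.eq_iff]; grind
  have hp_s : (edgeSwitch T p q r s hps hrq).Reachable p s := Adj.reachable (Or.inr (Or.inl rfl))
  have hr_q : (edgeSwitch T p q r s hps hrq).Reachable r q := Adj.reachable (Or.inr (Or.inr rfl))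
  have key : ∀ u v, T.Adj u v → (edgeSwitch T p q r s hps hrq).Reachable u v := by
    intro u v huv
    by_cases h1 : s(u, v) = s(p, q)
    · rcases Sym2.eq_iff.1 h1 with ⟨rfl, rfl⟩ | ⟨rfl, rfl⟩
      exacts [hp_r.trans hr_q, (hp_r.trans hr_q).symm]
    by_cases h2 : s(u, v) = s(r, s)
    · rcases Sym2.eq_iff.1 h2 with ⟨rfl, rfl⟩ | ⟨rfl, rfl⟩
      exacts [hp_r.symm.trans hp_s, (hp_r.symm.trans hp_s).symm]
    exact Adj.reachable (Or.inl ⟨huv, h1, h2⟩)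
  refine ⟨fun u v => ?_⟩
  obtain ⟨W⟩ := hT.preconnected u v
  induction W with
  | nil => exact Reachable.refl _
  | cons h _ ih => exact (key _ _ h).trans ih

/-- When `pq`, `rs` are edges and `ps`, `rq` are not, the switch preserves every degree. -/
theorem edgeSwitch_degree [Fintype V] [DecidableEq V] (hpq : T.Adj p q) (hrs : T.Adj r s)
    (hps' : ¬ T.Adj p s) (hrq' : ¬ T.Adj r q) (u : V) :
    (edgeSwitch T p q r s hps hrq).degree u = T.degree u := by
  -- Near `p, r` the switch exchanges the neighbours `q, s`; near `q, s` it exchanges `p, r`.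
  set σ : Equiv.Perm V := if u = p ∨ u = r then Equiv.swap q s
    else if u = q ∨ u = s then Equiv.swap p r else 1 with hσ
  rw [← card_neighborFinset_eq_degree, ← card_neighborFinset_eq_degree]
  refine Finset.card_equiv σ fun v => ?_
  rw [mem_neighborFinset, mem_neighborFinset]
  have hpqn := hpq.ne
  have hrsn := hrs.ne
  have a1 := hpq.symm
  have a2 := hrs.symm
  have a3 : ¬ T.Adj s p := fun h => hps' h.symm
  have a4 : ¬ T.Adj q r := fun h => hrq' h.symm
  simp only [edgeSwitch, Sym2.eq_iff, hσ, ne_eq]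
  split_ifs with h1 h2
  · rcases h1 with rfl | rfl <;> simp only [Equiv.swap_apply_def] <;> grind
  · rcases h2 with rfl | rfl <;> simp only [Equiv.swap_apply_def] <;> grind
  · simp only [Equiv.Perm.one_apply]; grind

theorem edgeSwitch_degSeq [Fintype V] [DecidableEq V] (hpq : T.Adj p q) (hrs : T.Adj r s)
    (hps' : ¬ T.Adj p s) (hrq' : ¬ T.Adj r q) :
    degSeq (edgeSwitch T p q r s hps hrq) = degSeq T := by
  unfold degSeq
  refine Multiset.map_congr rfl fun u _ => ?_
  convert edgeSwitch_degree (hps := hps) (hrq := hrq) hpq hrs hps' hrq' u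

/-- A switch along a path `q p r s` of a tree is a tree: it is connected and, the degrees being
unchanged, it has the same number of edges. -/
theorem edgeSwitch_isTree [Fintype V] [DecidableEq V] (hT : T.IsTree) (hpr : T.Adj p r)
    (hpq : T.Adj p q) (hrs : T.Adj r s) (hps' : ¬ T.Adj p s) (hrq' : ¬ T.Adj r q) :
    (edgeSwitch T p q r s hps hrq).IsTree := by
  rw [isTree_iff_connected_and_card]
  refine ⟨edgeSwitch_connected hT.1 hpr, ?_⟩
  rw [← (isTree_iff_connected_and_card.1 hT).2]
  have h1 := (edgeSwitch T p q r s hps hrq).sum_degrees_eq_twice_card_edges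
  have h2 := T.sum_degrees_eq_twice_card_edges
  rw [Finset.sum_congr rfl fun u _ =>
    edgeSwitch_degree (hps := hps) (hrq := hrq) hpq hrs hps' hrq' u, h2] at h1
  rw [Nat.card_eq_fintype_card, Nat.card_eq_fintype_card, ← edgeFinset_card, ← edgeFinset_card]
  omega

/-- A vertex `a ≠ v₀` which is not a neighbour of `v₀` but is joined to `v₀` by a walk lies in the
branch of a neighbour `c` of `v₀` having a second neighbour `c'`. The endpoint `z` of the walk is
kept as a variable for the induction. -/
theorem exists_child_of_not_adj {v₀ : V} {a z : V} (W : T.Walk a z) (hz : z = v₀)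
    (ha : a ≠ v₀) (hav : ¬ T.Adj v₀ a) :
    ∃ (c : V) (hc : c ∈ ({v₀}ᶜ : Set V)) (c' : V), T.Adj v₀ c ∧ T.Adj c c' ∧ c' ≠ v₀ ∧
      (T.induce ({v₀}ᶜ : Set V)).Reachable ⟨c, hc⟩ ⟨a, ha⟩ := by
  induction W with
  | nil => exact absurd hz ha
  | @cons a a' z h W ih =>
    have ha' : a' ≠ v₀ := by rintro rfl; exact hav h.symm
    have hadj : (T.induce ({v₀}ᶜ : Set V)).Adj ⟨a', ha'⟩ ⟨a, ha⟩ := h.symm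
    by_cases h' : T.Adj v₀ a'
    · exact ⟨a', ha', a, h', h.symm, ha, hadj.reachable⟩
    · obtain ⟨c, hc, c', h1, h2, h3, h4⟩ := ih hz ha' h'
      exact ⟨c, hc, c', h1, h2, h3, h4.trans hadj.reachable⟩

theorem IsTree.not_adj_of_adj_adj (hT : T.IsTree) {a c d : V} (h1 : T.Adj a c) (h2 : T.Adj c d) :
    ¬ T.Adj a d := by
  intro h
  classical
  exact hT.2.cliqueFree le_rfl {a, c, d} (is3Clique_triple_iff.2 ⟨h1, h, h2⟩)

theorem edgeSwitch_adj_root [DecidableEq V] {x : V} (hpx : T.Adj p x) (hpr : T.Adj p r) :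
    (edgeSwitch T p q r s hps hrq).Adj p (if x = q then s else x) := by
  have := hpx.ne
  have := hpr.ne
  simp only [edgeSwitch, Sym2.eq_iff]
  split_ifs with h <;> grind

/-- Edge by edge, the switch moves the energy of `pq` (at least `F q ^ 2`, as weights are at
least `1`) to `rq` (exactly `F q ^ 2`) and changes no other energy, because `F` vanishes at
`p, r, s`. The heavy edge `px` follows the switch when it is `pq`. -/
theorem edgeSwitch_energy_le {w₀ : ℝ} (hw₀ : 1 ≤ w₀) {x : V}
    (hpr : T.Adj p r) (hpq : T.Adj p q) (hrs : T.Adj r s)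
    (hps' : ¬ T.Adj p s) (hrq' : ¬ T.Adj r q) (F : V → ℝ) (hFp : F p = 0) (hFr : F r = 0)
    (hFs : F s = 0) [Fintype V] [DecidableEq V] (u v : V) :
    treeWeight (edgeSwitch T p q r s hps hrq) p (if x = q then s else x) w₀ u v * (F u - F v) ^ 2 ≤
      treeWeight T p x w₀ u v * (F u - F v) ^ 2 +
      ((if u = r ∧ v = q then F q ^ 2 else 0) + (if u = q ∧ v = r then F q ^ 2 else 0)
      - (if u = p ∧ v = q then F q ^ 2 else 0) - (if u = q ∧ v = p then F q ^ 2 else 0)) := by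
  have n1 := hpr.ne
  have n2 := hpq.ne
  have n3 := hrs.ne
  have n4 : s ≠ q := by rintro rfl; exact hps' hpq
  have a1 : ¬ T.Adj q r := fun h => hrq' h.symm
  have a2 : ¬ T.Adj s p := fun h => hps' h.symm
  have hsq := sq_nonneg (F q)
  have hmul : F q ^ 2 ≤ w₀ * F q ^ 2 := le_mul_of_one_le_left hsq hw₀
  by_cases h1 : s(u, v) = s(r, q)
  · have e1 : treeWeight (edgeSwitch T p q r s hps hrq) p (if x = q then s else x) w₀ u v = 1 := by
      have : (edgeSwitch T p q r s hps hrq).Adj u v := Or.inr (Or.inr h1)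
      rw [treeWeight, if_pos this, if_neg]
      rcases Sym2.eq_iff.1 h1 with ⟨rfl, rfl⟩ | ⟨rfl, rfl⟩ <;> grind
    rw [e1]
    rcases Sym2.eq_iff.1 h1 with ⟨rfl, rfl⟩ | ⟨rfl, rfl⟩
    · simp [treeWeight, hrq', hFr, n1.symm, hrq]
    · simp [treeWeight, a1, hFr, n1.symm, hrq, hrq.symm]
  by_cases h2 : s(u, v) = s(p, q)
  · have e1 : treeWeight (edgeSwitch T p q r s hps hrq) p (if x = q then s else x) w₀ u v = 0 := by
      rw [treeWeight, if_neg]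
      simp only [edgeSwitch, Sym2.eq_iff] at *
      grind
    have e2 : 1 ≤ treeWeight T p x w₀ u v := by
      have : T.Adj u v := by
        rcases Sym2.eq_iff.1 h2 with ⟨rfl, rfl⟩ | ⟨rfl, rfl⟩
        exacts [hpq, hpq.symm]
      rw [treeWeight, if_pos this]
      split_ifs <;> linarith
    have e3 := le_mul_of_one_le_left hsq e2
    rw [e1]
    rcases Sym2.eq_iff.1 h2 with ⟨rfl, rfl⟩ | ⟨rfl, rfl⟩
    · simp [hFp, n1, n2, n2.symm]; linarith
    · simp [hFp, n1, n2, n2.symm]; linarith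
  have hz : ((if u = r ∧ v = q then F q ^ 2 else 0) + (if u = q ∧ v = r then F q ^ 2 else 0)
      - (if u = p ∧ v = q then F q ^ 2 else 0) - (if u = q ∧ v = p then F q ^ 2 else 0)) = 0 := by
    simp only [Sym2.eq_iff, not_or] at h1 h2
    rw [if_neg h1.1, if_neg h1.2, if_neg h2.1, if_neg h2.2]
    ring
  rw [hz, add_zero]
  by_cases h3 : s(u, v) = s(p, s)
  · rcases Sym2.eq_iff.1 h3 with ⟨rfl, rfl⟩ | ⟨rfl, rfl⟩ <;> simp [hFp, hFs]
  by_cases h4 : s(u, v) = s(r, s)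
  · rcases Sym2.eq_iff.1 h4 with ⟨rfl, rfl⟩ | ⟨rfl, rfl⟩ <;> simp [hFr, hFs]
  apply le_of_eq
  congr 1
  have e : (edgeSwitch T p q r s hps hrq).Adj u v ↔ T.Adj u v := by
    simp only [edgeSwitch]
    tauto
  simp only [treeWeight, e]
  congr 2
  simp only [Sym2.eq_iff] at h2 h3
  apply propext
  split_ifs with h
  · subst h; tauto
  · rfl

end Switch

/-- if a first Dirichlet eigenvector of a minimal rooted tree is
strictly positive on exactly one branch at the root and zero on the others,
then every branch on which it vanishes is a single pendant vertex. -/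
theorem zero_branches_are_pendant {V : Type*} [Fintype V] [DecidableEq V]
    (T : SimpleGraph V) (hT : T.IsTree) (v₀ x : V) (hx : T.Adj v₀ x)
    (w₀ : ℝ) (hw₀ : 1 ≤ w₀)
    (hmin : ∀ (T' : SimpleGraph V) (x' : V), T'.IsTree → T'.Adj v₀ x' →
      degSeq T' = degSeq T → nuRooted T v₀ x w₀ ≤ nuRooted T' v₀ x' w₀)
    (b : V) (hb : b ∈ ({v₀}ᶜ : Set V)) (hbadj : T.Adj v₀ b)
    (f : ({v₀}ᶜ : Set V) → ℝ)
    (heig : (dirichletMatrix (treeWeight T v₀ x w₀) ({v₀}ᶜ : Set V)) *ᵥ f =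
      nuRooted T v₀ x w₀ • f)
    (hsign : ∀ a : ({v₀}ᶜ : Set V),
      ((T.induce ({v₀}ᶜ : Set V)).Reachable a ⟨b, hb⟩ → 0 < f a) ∧
      (¬ (T.induce ({v₀}ᶜ : Set V)).Reachable a ⟨b, hb⟩ → f a = 0)) :
    ∀ a : ({v₀}ᶜ : Set V), f a = 0 → T.degree a.1 = 1 ∧ T.Adj v₀ a.1 := by
  intro a hfa
  by_contra hcon
  have hanr : ¬ (T.induce ({v₀}ᶜ : Set V)).Reachable a ⟨b, hb⟩ := fun h =>
    ((hsign a).1 h).ne' hfa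
  obtain ⟨c, hc, c', hvc, hcc', hc'v, hca⟩ :
      ∃ (c : V) (hc : c ∈ ({v₀}ᶜ : Set V)) (c' : V), T.Adj v₀ c ∧ T.Adj c c' ∧ c' ≠ v₀ ∧
        (T.induce ({v₀}ᶜ : Set V)).Reachable ⟨c, hc⟩ a := by
    by_cases hva : T.Adj v₀ a.1
    · have hdeg : T.degree a.1 ≠ 1 := fun h => hcon ⟨h, hva⟩
      by_contra! hno
      apply hdeg
      rw [← card_neighborFinset_eq_degree, Finset.card_eq_one]
      refine ⟨v₀, ?_⟩
      ext y
      rw [mem_neighborFinset, Finset.mem_singleton]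
      constructor
      · intro hy
        by_contra hyv
        exact hno a.1 a.2 y hva hy hyv (Reachable.refl _)
      · rintro rfl; exact hva.symm
    · obtain ⟨W⟩ := hT.1.preconnected a.1 v₀
      exact exists_child_of_not_adj W rfl a.2 hva
  have hcnr : ¬ (T.induce ({v₀}ᶜ : Set V)).Reachable ⟨c, hc⟩ ⟨b, hb⟩ := fun h =>
    hanr (hca.symm.trans h)
  have hc'nr : ¬ (T.induce ({v₀}ᶜ : Set V)).Reachable ⟨c', hc'v⟩ ⟨b, hb⟩ := fun h => by
    have hadj : (T.induce ({v₀}ᶜ : Set V)).Adj ⟨c, hc⟩ ⟨c', hc'v⟩ := hcc'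
    exact hcnr (hadj.reachable.trans h)
  have hcb : c ≠ b := by rintro rfl; exact hcnr (Reachable.refl _)
  have hc'b : c' ≠ b := by rintro rfl; exact hc'nr (Reachable.refl _)
  have hvc' : ¬ T.Adj v₀ c' := IsTree.not_adj_of_adj_adj hT hvc hcc'
  have hcb' : ¬ T.Adj c b := IsTree.not_adj_of_adj_adj hT hvc.symm hbadj
  set T' := edgeSwitch T v₀ b c c' hc'v.symm hcb with hT'
  have hT'tree : T'.IsTree := edgeSwitch_isTree hT hvc hbadj hcc' hvc' hcb'
  have hbv : b ≠ v₀ := hb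
  have hcv : c ≠ v₀ := hc
  -- The weight `w₀` stays on its edge, unless that edge is `v₀b`; then it moves to `v₀c'`.
  set x' : V := if x = b then c' else x with hx'
  have hx'adj : T'.Adj v₀ x' := edgeSwitch_adj_root hx hvc
  have hle := hmin T' x' hT'tree hx'adj (edgeSwitch_degSeq hbadj hcc' hvc' hcb')
  set ν := nuRooted T v₀ x w₀ with hν
  -- `F` is the extension of `f` by zero to the root.
  set F : V → ℝ := fun v => if h : v ∈ ({v₀}ᶜ : Set V) then f ⟨v, h⟩ else 0 with hF
  have hFf : (fun v : ({v₀}ᶜ : Set V) => F v) = f := by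
    funext v
    simp only [hF, dif_pos v.2]
  have hF0 : ∀ v, v ∉ ({v₀}ᶜ : Set V) → F v = 0 := fun v hv => by simp only [hF, dif_neg hv]
  have hFv : F v₀ = 0 := hF0 v₀ (by simp)
  have hFb : 0 < F b := by
    simp only [hF, dif_pos hb]; exact (hsign _).1 (Reachable.refl _)
  have hFc : F c = 0 := by
    simp only [hF, dif_pos hc]; exact (hsign _).2 hcnr
  have hFc' : F c' = 0 := by
    have : c' ∈ ({v₀}ᶜ : Set V) := hc'v
    simp only [hF, dif_pos this]; exact (hsign _).2 hc'nr
  have hFnn : ∀ v, 0 ≤ F v := by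
    intro v
    by_cases hv : v ∈ ({v₀}ᶜ : Set V)
    · simp only [hF, dif_pos hv]
      by_cases hr : (T.induce ({v₀}ᶜ : Set V)).Reachable ⟨v, hv⟩ ⟨b, hb⟩
      · exact ((hsign _).1 hr).le
      · exact ((hsign _).2 hr).ge
    · exact (hF0 v hv).ge
  set w := treeWeight T v₀ x w₀ with hw
  set w' := treeWeight T' v₀ x' w₀ with hw'
  have hpt : ∀ u v, w' u v * (F u - F v) ^ 2 ≤ w u v * (F u - F v) ^ 2 +
      ((if u = c ∧ v = b then F b ^ 2 else 0) + (if u = b ∧ v = c then F b ^ 2 else 0)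
      - (if u = v₀ ∧ v = b then F b ^ 2 else 0) - (if u = b ∧ v = v₀ then F b ^ 2 else 0)) := by
    exact edgeSwitch_energy_le hw₀ hvc hbadj hcc' hvc' hcb' F hFv hFc hFc'
  have hE : ∑ u, ∑ v, w' u v * (F u - F v) ^ 2 ≤ ∑ u, ∑ v, w u v * (F u - F v) ^ 2 := by
    refine (Finset.sum_le_sum fun u _ => Finset.sum_le_sum fun v _ => hpt u v).trans_eq ?_
    simp [Finset.sum_add_distrib, Finset.sum_sub_distrib, ite_and]
  rw [← two_mul_dirichlet_form w' (treeWeight_comm _ _ _ _) ({v₀}ᶜ : Set V) F hF0,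
    ← two_mul_dirichlet_form w (treeWeight_comm _ _ _ _) ({v₀}ᶜ : Set V) F hF0, hFf, heig,
    dotProduct_smul, smul_eq_mul] at hE
  have heig' : dirichletMatrix w' ({v₀}ᶜ : Set V) *ᵥ f = ν • f :=
    mulVec_eq_of_rayleigh_le
      (dirichletMatrix_isHermitian w' (treeWeight_comm _ _ _ _) _) hle (by linarith)
  -- At `c` the equation reads `-∑ w' c u * F u = 0`, whereas the term `u = b` is positive.
  have hat := congrFun heig' ⟨c, hc⟩
  rw [← hFf, dirichletMatrix_mulVec w' _ F hF0] at hat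
  simp only [hFc, mul_zero, Pi.smul_apply, smul_eq_mul, zero_sub, neg_eq_zero] at hat
  have hw'nn : ∀ u v, 0 ≤ w' u v := by
    intro u v
    simp only [hw', treeWeight]
    split_ifs <;> linarith
  have hcbw : w' c b = 1 := by
    have hadj : T'.Adj c b := Or.inr (Or.inr rfl)
    simp only [hw', treeWeight, if_pos hadj]
    rw [if_neg]
    grind
  have hpos : 0 < ∑ u, w' c u * F u := by
    refine Finset.sum_pos' (fun u _ => mul_nonneg (hw'nn _ _) (hFnn u)) ⟨b, Finset.mem_univ _, ?_⟩
    rw [hcbw]; linarith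
  exact hpos.ne' hat
end
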